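/- arXiv:math/0411095 — 3 statements merged into one kernel-verified Lean document; each statement's English description precedes it below -/
import Mathlib

section
/- For every δ > 0 there exists N such that for all n ≥ N, the probability that |det M_n| ≥ √(n!) · exp(−29 · n^{1/2} · (ln n)^{1/2}) is at least 1 − δ. (That is, with probability 1 − o(1) as n → ∞, the absolute value of the determinant of a random ±1 matrix is at least √(n!) exp(−29√(n ln n)).) -/
/-- The random sign matrix determined by a Boolean matrix: entries are `+1` or `-1`. -/
noncomputable def signMatrix (n : ℕ) (b : Fin n → Fin n → Bool) : Matrix (Fin n) (Fin n) ℝ :=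
  Matrix.of fun i j => if b i j then (1 : ℝ) else -1

open Finset
open scoped BigOperators Matrix

/-- The real sign `±1` attached to a Boolean. -/
noncomputable def boolSign (c : Bool) : ℝ := if c then 1 else -1

lemma boolSign_not (c : Bool) : boolSign (!c) = -boolSign c := by
  cases c <;> simp [boolSign]

lemma boolSign_sq (c : Bool) : boolSign c ^ 2 = 1 := by
  cases c <;> simp [boolSign]

lemma abs_boolSign (c : Bool) : |boolSign c| = 1 := by
  cases c <;> simp [boolSign]

section Forms

variable {ι : Type*} [DecidableEq ι]

lemma linearForm_update (c : ι → ℝ) {S : Finset ι} {a : ι} (ha : a ∉ S) (x : ι → Bool) (e : Bool) :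
    ∑ i ∈ S, c i * boolSign (Function.update x a e i) = ∑ i ∈ S, c i * boolSign (x i) := by
  refine sum_congr rfl fun i hi => ?_
  rw [Function.update_of_ne (ne_of_mem_of_not_mem hi ha)]

lemma quadraticForm_update (c : ι → ι → ℝ) {S : Finset ι} {a : ι} (ha : a ∉ S) (x : ι → Bool)
    (e : Bool) :
    ∑ i ∈ S, ∑ j ∈ S, c i j * (boolSign (Function.update x a e i) *
      boolSign (Function.update x a e j)) =
    ∑ i ∈ S, ∑ j ∈ S, c i j * (boolSign (x i) * boolSign (x j)) := by
  refine sum_congr rfl fun i hi => sum_congr rfl fun j hj => ?_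
  rw [Function.update_of_ne (ne_of_mem_of_not_mem hi ha),
    Function.update_of_ne (ne_of_mem_of_not_mem hj ha)]

lemma expect_quadraticForm_insert (c : ι → ι → ℝ) (hc : ∀ i, c i i = 0)
    (hs : ∀ i j, c i j = c j i) {S : Finset ι} {a : ι} (ha : a ∉ S) (x : ι → Bool) :
    ∑ i ∈ insert a S, ∑ j ∈ insert a S, c i j * (boolSign (x i) * boolSign (x j)) =
      ∑ i ∈ S, ∑ j ∈ S, c i j * (boolSign (x i) * boolSign (x j)) +
        boolSign (x a) * ∑ i ∈ S, 2 * c i a * boolSign (x i) := by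
  simp only [sum_insert ha, hc, sum_add_distrib, mul_sum]
  have : ∑ j ∈ S, c a j * (boolSign (x a) * boolSign (x j)) =
      ∑ i ∈ S, c i a * (boolSign (x i) * boolSign (x a)) :=
    sum_congr rfl fun i _ => by rw [hs a i]; ring
  rw [this]
  have h2 : ∑ i ∈ S, boolSign (x a) * (2 * c i a * boolSign (x i)) =
      2 * ∑ i ∈ S, c i a * (boolSign (x i) * boolSign (x a)) := by
    rw [mul_sum]; exact sum_congr rfl fun i _ => by ring
  rw [h2]; ring

lemma sum_sq_insert (c : ι → ι → ℝ) (hc : ∀ i, c i i = 0)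
    (hs : ∀ i j, c i j = c j i) {S : Finset ι} {a : ι} (ha : a ∉ S) :
    2 * ∑ i ∈ insert a S, ∑ j ∈ insert a S, c i j ^ 2 =
      2 * ∑ i ∈ S, ∑ j ∈ S, c i j ^ 2 + ∑ i ∈ S, (2 * c i a) ^ 2 := by
  simp only [sum_insert ha, hc, sum_add_distrib, mul_pow, ← mul_sum]
  simp only [hs a]
  ring

end Forms

section Moments

variable {ι : Type*} [Fintype ι] [DecidableEq ι]

lemma expect_boolSign_mul (a : ι) (f : (ι → Bool) → ℝ)
    (hf : ∀ x c, f (Function.update x a c) = f x) :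
    𝔼 x, boolSign (x a) * f x = 0 := by
  have hinv : Function.Involutive fun x : ι → Bool => Function.update x a (!x a) := by
    intro x
    simp
  have h := Fintype.expect_equiv hinv.toPerm
    (fun x : ι → Bool => boolSign (x a) * f x) (fun x => -(boolSign (x a) * f x)) (by
      intro x
      simp [Function.Involutive.toPerm, hf, boolSign_not])
  rw [Finset.expect_neg_distrib] at h
  linarith

lemma expect_sq_add_sign (a : ι) (f g : (ι → Bool) → ℝ)
    (hf : ∀ x e, f (Function.update x a e) = f x) (hg : ∀ x e, g (Function.update x a e) = g x) :
    𝔼 x, (f x + boolSign (x a) * g x) ^ 2 = 𝔼 x, f x ^ 2 + 𝔼 x, g x ^ 2 := by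
  have h0 := expect_boolSign_mul a (fun x => 2 * f x * g x) (by intro x e; simp [hf, hg])
  rw [← expect_add_distrib, ← add_zero (𝔼 x, (f x ^ 2 + g x ^ 2)), ← h0, ← expect_add_distrib]
  refine expect_congr rfl fun x _ => ?_
  linear_combination g x ^ 2 * boolSign_sq (x a)

lemma expect_pow_four_add_sign (a : ι) (f g : (ι → Bool) → ℝ)
    (hf : ∀ x e, f (Function.update x a e) = f x) (hg : ∀ x e, g (Function.update x a e) = g x) :
    𝔼 x, (f x + boolSign (x a) * g x) ^ 4 =
      𝔼 x, f x ^ 4 + 6 * 𝔼 x, f x ^ 2 * g x ^ 2 + 𝔼 x, g x ^ 4 := by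
  have h0 := expect_boolSign_mul a (fun x => 4 * f x ^ 3 * g x + 4 * f x * g x ^ 3)
    (by intro x e; simp [hf, hg])
  rw [mul_expect, ← expect_add_distrib, ← expect_add_distrib,
    ← add_zero (𝔼 x, (f x ^ 4 + 6 * (f x ^ 2 * g x ^ 2) + g x ^ 4)), ← h0, ← expect_add_distrib]
  refine expect_congr rfl fun x _ => ?_
  linear_combination (6 * f x ^ 2 * g x ^ 2 + g x ^ 4 * (boolSign (x a) ^ 2 + 1)
    + 4 * f x * g x ^ 3 * boolSign (x a)) * boolSign_sq (x a)

lemma expect_linearForm_sq (c : ι → ℝ) (S : Finset ι) :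
    𝔼 x : ι → Bool, (∑ i ∈ S, c i * boolSign (x i)) ^ 2 = ∑ i ∈ S, c i ^ 2 := by
  induction S using Finset.induction_on with
  | empty => simp
  | insert a S ha ih =>
    have h := expect_sq_add_sign a (fun x => ∑ i ∈ S, c i * boolSign (x i)) (fun _ => c a)
      (linearForm_update c ha) (by simp)
    simp only [sum_insert ha]
    rw [ih, Fintype.expect_const] at h
    rw [add_comm (c a ^ 2), ← h]
    exact expect_congr rfl fun x _ => by ring

lemma expect_linearForm_pow_four_le (c : ι → ℝ) (S : Finset ι) :
    𝔼 x : ι → Bool, (∑ i ∈ S, c i * boolSign (x i)) ^ 4 ≤ 3 * (∑ i ∈ S, c i ^ 2) ^ 2 := by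
  induction S using Finset.induction_on with
  | empty => simp
  | insert a S ha ih =>
    have h := expect_pow_four_add_sign a (fun x => ∑ i ∈ S, c i * boolSign (x i)) (fun _ => c a)
      (linearForm_update c ha) (by simp)
    simp only [sum_insert ha]
    rw [← expect_mul, expect_linearForm_sq, Fintype.expect_const] at h
    have e : 𝔼 x : ι → Bool, (c a * boolSign (x a) + ∑ i ∈ S, c i * boolSign (x i)) ^ 4 =
        𝔼 x : ι → Bool, (∑ i ∈ S, c i * boolSign (x i) + boolSign (x a) * c a) ^ 4 :=
      expect_congr rfl fun x _ => by ring
    rw [e, h]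
    nlinarith [sq_nonneg (c a ^ 2)]

lemma expect_mul_sq_le (f g : (ι → Bool) → ℝ) :
    (𝔼 x, f x * g x) ^ 2 ≤ (𝔼 x, f x ^ 2) * 𝔼 x, g x ^ 2 :=
  expect_mul_sq_le_sq_mul_sq univ f g

lemma expect_quadraticForm_sq (c : ι → ι → ℝ) (hc : ∀ i, c i i = 0)
    (hs : ∀ i j, c i j = c j i) (S : Finset ι) :
    𝔼 x : ι → Bool, (∑ i ∈ S, ∑ j ∈ S, c i j * (boolSign (x i) * boolSign (x j))) ^ 2 =
      2 * ∑ i ∈ S, ∑ j ∈ S, c i j ^ 2 := by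
  induction S using Finset.induction_on with
  | empty => simp
  | insert a S ha ih =>
    rw [sum_sq_insert c hc hs ha, ← ih, ← expect_linearForm_sq (fun i => 2 * c i a) S,
      ← expect_sq_add_sign a _ _ (quadraticForm_update c ha) (linearForm_update _ ha)]
    exact expect_congr rfl fun x _ => by rw [expect_quadraticForm_insert c hc hs ha]

/-- Hypercontractivity for homogeneous quadratic forms in random signs. -/
lemma expect_quadraticForm_pow_four_le (c : ι → ι → ℝ) (hc : ∀ i, c i i = 0)
    (hs : ∀ i j, c i j = c j i) (S : Finset ι) :
    𝔼 x : ι → Bool, (∑ i ∈ S, ∑ j ∈ S, c i j * (boolSign (x i) * boolSign (x j))) ^ 4 ≤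
      27 * (2 * ∑ i ∈ S, ∑ j ∈ S, c i j ^ 2) ^ 2 := by
  induction S using Finset.induction_on with
  | empty => simp
  | insert a S ha ih =>
    rw [sum_sq_insert c hc hs ha]
    simp only [expect_quadraticForm_insert c hc hs ha]
    rw [expect_pow_four_add_sign a _ _ (quadraticForm_update c ha) (linearForm_update _ ha)]
    have h4 := expect_linearForm_pow_four_le (fun i => 2 * c i a) S
    have hcs := expect_mul_sq_le
      (fun x => (∑ i ∈ S, ∑ j ∈ S, c i j * (boolSign (x i) * boolSign (x j))) ^ 2)
      (fun x => (∑ i ∈ S, 2 * c i a * boolSign (x i)) ^ 2)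
    simp only [← pow_mul] at hcs
    norm_num only at hcs
    have hA : 0 ≤ 2 * ∑ i ∈ S, ∑ j ∈ S, c i j ^ 2 := by positivity
    have hB : 0 ≤ ∑ i ∈ S, (2 * c i a) ^ 2 := by positivity
    have hM : 0 ≤ 𝔼 x : ι → Bool, (∑ i ∈ S, 2 * c i a * boolSign (x i)) ^ 4 :=
      expect_nonneg fun x _ => by positivity
    generalize (2 * ∑ i ∈ S, ∑ j ∈ S, c i j ^ 2) = A at *
    generalize (∑ i ∈ S, (2 * c i a) ^ 2) = B at *
    have hP : 𝔼 x : ι → Bool, (∑ i ∈ S, ∑ j ∈ S, c i j * (boolSign (x i) * boolSign (x j))) ^ 2 *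
        (∑ i ∈ S, 2 * c i a * boolSign (x i)) ^ 2 ≤ 9 * (A * B) := by
      refine abs_le_of_sq_le_sq' ?_ (by positivity) |>.2
      refine hcs.trans ((mul_le_mul ih h4 hM (by positivity)).trans (le_of_eq ?_))
      ring
    nlinarith [mul_nonneg hA hB, sq_nonneg B]

end Moments

section Gram

/-- The matrix whose rows are the first `d` vectors of a sequence. -/
def rowMatrix {ι : Type*} (r : ℕ → ι → ℝ) (d : ℕ) : Matrix (Fin d) ι ℝ :=
  Matrix.of fun i => r i

/-- The Gram determinant of the first `d` vectors of a sequence. -/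
noncomputable def gramDet {ι : Type*} [Fintype ι] (r : ℕ → ι → ℝ) (d : ℕ) : ℝ :=
  (rowMatrix r d * (rowMatrix r d)ᵀ).det

/-- The orthogonal projection onto the kernel of `A` when the rows of `A` are independent, and a
coordinate projection of rank `n - d` otherwise. -/
noncomputable def kerProj {d n : ℕ} (A : Matrix (Fin d) (Fin n) ℝ) : Matrix (Fin n) (Fin n) ℝ :=
  if (A * Aᵀ).det = 0 then Matrix.diagonal fun i => if d ≤ i then 1 else 0
  else 1 - Aᵀ * (A * Aᵀ)⁻¹ * A

lemma kerProj_transpose {d n : ℕ} (A : Matrix (Fin d) (Fin n) ℝ) : (kerProj A)ᵀ = kerProj A := by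
  unfold kerProj
  split_ifs
  · simp
  · simp [Matrix.transpose_nonsing_inv, Matrix.mul_assoc]

lemma mul_kerProj {d n : ℕ} (A : Matrix (Fin d) (Fin n) ℝ) (h : (A * Aᵀ).det ≠ 0) :
    A * kerProj A = 0 := by
  rw [kerProj, if_neg h, Matrix.mul_sub, Matrix.mul_one, ← Matrix.mul_assoc, ← Matrix.mul_assoc,
    Matrix.mul_nonsing_inv _ (isUnit_iff_ne_zero.2 h), Matrix.one_mul, sub_self]

lemma kerProj_mul_self {d n : ℕ} (A : Matrix (Fin d) (Fin n) ℝ) :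
    kerProj A * kerProj A = kerProj A := by
  by_cases h : (A * Aᵀ).det = 0
  · simp [kerProj, if_pos h]
  · have h2 := mul_kerProj A h
    conv_lhs => enter [1]; rw [kerProj, if_neg h]
    rw [Matrix.sub_mul, Matrix.one_mul, Matrix.mul_assoc, h2, Matrix.mul_zero, sub_zero]

lemma trace_kerProj {d n : ℕ} (hd : d ≤ n) (A : Matrix (Fin d) (Fin n) ℝ) :
    (kerProj A).trace = n - d := by
  unfold kerProj
  split_ifs with h
  · rw [Matrix.trace_diagonal, Fin.sum_univ_eq_sum_range (fun i => if d ≤ i then (1 : ℝ) else 0) n,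
      ← Finset.sum_range_add_sum_Ico _ hd]
    rw [sum_congr rfl (g := fun _ => (0 : ℝ)), sum_congr (s₁ := Finset.Ico d n) rfl
      (g := fun _ => (1 : ℝ))]
    · simp [hd]
    · intro x hx
      simp [(Finset.mem_Ico.1 hx).1]
    · intro x hx
      simp [Finset.mem_range.1 hx]
  · rw [Matrix.trace_sub, Matrix.trace_one, Matrix.mul_assoc, Matrix.trace_mul_comm,
      Matrix.mul_assoc, Matrix.nonsing_inv_mul _ (isUnit_iff_ne_zero.2 h), Matrix.trace_one]
    simp

lemma gramDet_succ {n : ℕ} (r : ℕ → Fin n → ℝ) (d : ℕ) (h : gramDet r d ≠ 0) :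
    gramDet r (d + 1) = gramDet r d * (r d ⬝ᵥ kerProj (rowMatrix r d) *ᵥ r d) := by
  set A := rowMatrix r d with hA
  have hu : IsUnit (A * Aᵀ).det := isUnit_iff_ne_zero.2 h
  have := Matrix.invertibleOfIsUnitDet _ hu
  set R : Matrix (Fin 1) (Fin n) ℝ := Matrix.of fun _ => r d with hR
  have hB : rowMatrix r (d + 1) = (Matrix.fromRows A R).submatrix finSumFinEquiv.symm id := by
    ext i j
    obtain ⟨i, rfl⟩ := finSumFinEquiv.surjective i
    rcases i with i | i
    · simp [rowMatrix, hA]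
    · simp [rowMatrix, hR]
  have hG : rowMatrix r (d + 1) * (rowMatrix r (d + 1))ᵀ =
      (Matrix.fromBlocks (A * Aᵀ) (A * Rᵀ) (R * Aᵀ) (R * Rᵀ)).submatrix
        finSumFinEquiv.symm finSumFinEquiv.symm := by
    rw [hB, Matrix.transpose_submatrix, ← Matrix.submatrix_mul _ _ _ id _ Function.bijective_id,
      Matrix.transpose_fromRows, Matrix.fromRows_mul_fromCols]
  rw [gramDet, hG, Matrix.det_submatrix_equiv_self, Matrix.det_fromBlocks₁₁, gramDet, ← hA]
  congr 1
  rw [Matrix.invOf_eq_nonsing_inv, kerProj, if_neg hu.ne_zero]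
  have : R * Rᵀ - R * Aᵀ * (A * Aᵀ)⁻¹ * (A * Rᵀ) =
      R * (1 - Aᵀ * (A * Aᵀ)⁻¹ * A) * Rᵀ := by
    simp only [Matrix.mul_sub, Matrix.sub_mul, Matrix.mul_one, Matrix.mul_assoc]
  rw [this, Matrix.det_fin_one, Matrix.mul_assoc]
  simp only [Matrix.mul_apply, hR, dotProduct, Matrix.mulVec, Matrix.of_apply,
    Matrix.transpose_apply]

lemma gramDet_eq_prod {n : ℕ} (r : ℕ → Fin n → ℝ) (d : ℕ)
    (h : ∀ i < d, 0 < r i ⬝ᵥ kerProj (rowMatrix r i) *ᵥ r i) :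
    0 < gramDet r d ∧
      gramDet r d = ∏ i ∈ range d, r i ⬝ᵥ kerProj (rowMatrix r i) *ᵥ r i := by
  induction d with
  | zero => simp [gramDet]
  | succ d ih =>
    obtain ⟨h1, h2⟩ := ih fun i hi => h i (by omega)
    rw [prod_range_succ, ← h2, gramDet_succ r d h1.ne']
    exact ⟨mul_pos h1 (h d (by omega)), rfl⟩

end Gram

section Projection

variable {ι : Type*} [Fintype ι]

lemma dotProduct_proj_mulVec {Q : Matrix ι ι ℝ} (hT : Qᵀ = Q) (hQ : Q * Q = Q)
    (x : ι → ℝ) : x ⬝ᵥ Q *ᵥ x = (Q *ᵥ x) ⬝ᵥ (Q *ᵥ x) := by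
  conv_lhs => rw [← hQ, ← Matrix.mulVec_mulVec, Matrix.dotProduct_mulVec, ← Matrix.mulVec_transpose,
    hT]

lemma sq_dotProduct_le_of_proj {Q : Matrix ι ι ℝ} (hT : Qᵀ = Q) (hQ : Q * Q = Q)
    (x u : ι → ℝ) (hu : Q *ᵥ u = u) : (x ⬝ᵥ u) ^ 2 ≤ (x ⬝ᵥ Q *ᵥ x) * ∑ i, u i ^ 2 := by
  have h1 : x ⬝ᵥ u = (Q *ᵥ x) ⬝ᵥ u := by
    conv_lhs => rw [← hu, Matrix.dotProduct_mulVec, ← Matrix.mulVec_transpose, hT]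
  rw [h1, dotProduct_proj_mulVec hT hQ]
  refine (Finset.sum_mul_sq_le_sq_mul_sq univ _ _).trans (le_of_eq ?_)
  simp [dotProduct, sq]

lemma sum_sq_proj {Q : Matrix ι ι ℝ} (hT : Qᵀ = Q) (hQ : Q * Q = Q) :
    ∑ i, ∑ j, Q i j ^ 2 = Q.trace := by
  conv_rhs => rw [← hQ]
  simp only [Matrix.trace, Matrix.diag_apply, Matrix.mul_apply, sq]
  refine sum_congr rfl fun i _ => sum_congr rfl fun j _ => ?_
  conv_lhs => enter [2]; rw [← hT]
  rfl

end Projection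

section LittlewoodOfford

/-- The Erdős–Littlewood–Offord inequality. -/
lemma card_abs_add_sum_boolSign_lt_le {ι : Type*} [Fintype ι] (u : ι → ℝ) {ε : ℝ}
    (hu : ∀ i, ε ≤ |u i|) (c : ℝ) :
    Nat.card {x : ι → Bool // |c + ∑ i, boolSign (x i) * u i| < ε} ≤
      (Fintype.card ι).choose (Fintype.card ι / 2) := by
  classical
  let g : (ι → Bool) → Finset ι := fun x => univ.filter fun i => (x i = true ↔ 0 < u i)
  have hg : Function.Injective g := by
    intro x y hxy
    funext i
    have := congrArg (i ∈ ·) hxy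
    simp only [g, mem_filter, mem_univ, true_and, eq_iff_iff] at this
    by_cases h : 0 < u i <;> simp only [h, iff_true, iff_false, Bool.not_eq_true] at this <;>
      cases hx : x i <;> cases hy : y i <;> simp_all
  have hterm : ∀ x i, boolSign (x i) * u i = if i ∈ g x then |u i| else -|u i| := by
    intro x i
    simp only [g, mem_filter, mem_univ, true_and]
    rcases lt_or_ge 0 (u i) with h | h
    · rw [abs_of_pos h]
      cases hx : x i <;> simp [boolSign, h]
    · rw [abs_of_nonpos h]
      cases hx : x i <;> simp [boolSign, not_lt.2 h]
  rw [Nat.card_eq_fintype_card, Fintype.card_subtype, ← card_image_of_injective _ hg]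
  apply IsAntichain.sperner
  intro a ha b hb hab hsub
  simp only [coe_image, Set.mem_image, mem_coe, mem_filter, mem_univ, true_and] at ha hb
  obtain ⟨x, hx, rfl⟩ := ha
  obtain ⟨y, hy, rfl⟩ := hb
  obtain ⟨i, hiy, hix⟩ := exists_of_ssubset (hsub.ssubset_of_ne hab)
  have hle : ∑ j, boolSign (y j) * u j - ∑ j, boolSign (x j) * u j ≥ 2 * ε := by
    rw [← sum_sub_distrib]
    have h0 : ∀ j ∈ univ, 0 ≤ boolSign (y j) * u j - boolSign (x j) * u j := by
      intro j _
      rw [hterm, hterm]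
      have := abs_nonneg (u j)
      by_cases h1 : j ∈ g x
      · simp [h1, hsub h1]
      · split_ifs <;> linarith
    have := single_le_sum h0 (mem_univ i)
    refine le_trans ?_ this
    rw [hterm, hterm, if_pos hiy, if_neg hix]
    linarith [hu i]
  rw [abs_lt] at hx hy
  linarith [hx.1, hy.2]

lemma card_abs_sum_boolSign_lt_le {ι : Type*} [Fintype ι] (u : ι → ℝ) {ε : ℝ}
    (T : Finset ι) (hu : ∀ i ∈ T, ε ≤ |u i|) :
    Nat.card {x : ι → Bool // |∑ i, boolSign (x i) * u i| < ε} ≤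
      T.card.choose (T.card / 2) * 2 ^ (Fintype.card ι - T.card) := by
  classical
  let e := Equiv.piEquivPiSubtypeProd (fun i => i ∈ T) (fun _ : ι => Bool)
  let P : ({i // i ∉ T} → Bool) → Type _ := fun z => {y : {i // i ∈ T} → Bool //
    |∑ i : {i // i ∉ T}, boolSign (z i) * u i + ∑ i : {i // i ∈ T}, boolSign (y i) * u i| < ε}
  let f : {x : ι → Bool // |∑ i, boolSign (x i) * u i| < ε} → Σ z, P z := fun x =>
    ⟨(e x.1).2, (e x.1).1, by
      have := x.2
      rw [← Fintype.sum_subtype_add_sum_subtype (fun i => i ∈ T), add_comm] at this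
      convert this <;> rfl⟩
  have hf : Function.Injective f := by
    intro x y hxy
    apply Subtype.ext
    apply e.injective
    have h1 : (e x.1).2 = (e y.1).2 := congrArg Sigma.fst hxy
    have h2 : (e x.1).1 = (e y.1).1 := by
      have : ∀ a b : Σ z, P z, a = b → a.2.1 = b.2.1 := by rintro a b rfl; rfl
      exact this _ _ hxy
    exact Prod.ext h2 h1
  refine (Nat.card_le_card_of_injective f hf).trans ?_
  rw [Nat.card_sigma]
  refine (sum_le_card_nsmul univ _ _ fun z _ => card_abs_add_sum_boolSign_lt_le
    (fun i : {i // i ∈ T} => u i) (fun i => hu i i.2) _).trans ?_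
  rw [card_univ, Fintype.card_fun, Fintype.card_bool, Fintype.card_subtype_compl, smul_eq_mul,
    Fintype.card_coe, mul_comm]

lemma mul_centralBinom_sq_le (m : ℕ) : (2 * m + 1) * m.centralBinom ^ 2 ≤ 16 ^ m := by
  induction m with
  | zero => simp
  | succ m ih =>
    have h := Nat.succ_mul_centralBinom_succ m
    have h2 : (m + 1) ^ 2 * ((2 * (m + 1) + 1) * (m + 1).centralBinom ^ 2) ≤
        (m + 1) ^ 2 * 16 ^ (m + 1) := by
      calc _ = (2 * m + 3) * ((m + 1) * (m + 1).centralBinom) ^ 2 := by ring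
        _ = 4 * ((2 * m + 3) * (2 * m + 1)) * ((2 * m + 1) * m.centralBinom ^ 2) := by rw [h]; ring
        _ ≤ 4 * (4 * (m + 1) ^ 2) * 16 ^ m :=
          Nat.mul_le_mul (Nat.mul_le_mul_left _ (by nlinarith)) ih
        _ = _ := by ring
    exact Nat.le_of_mul_le_mul_left h2 (by positivity)

end LittlewoodOfford

section Pattern

/-- A vector orthogonal to enough sign vectors is not concentrated on few coordinates. -/
lemma lt_card_filter_of_pattern {n l : ℕ} (hl : 0 < l) (hln : l ≤ n) (B : Set (Fin n → Bool))
    (hB : ∀ S : Finset (Fin n), S.card = l → ∀ τ ⊆ S, ∃ x ∈ B, ∀ j ∈ S, x j = decide (j ∈ τ))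
    (u : Fin n → ℝ) (hu : ∀ x ∈ B, ∑ j, boolSign (x j) * u j = 0) {M : ℝ} (hM : 0 < M)
    (j₀ : Fin n) (hj : |u j₀| = M) :
    l < (univ.filter fun j => M / n ≤ |u j|).card := by
  by_contra! hcard
  have hn : (0 : ℝ) < n := by exact_mod_cast (by omega : 0 < n)
  obtain ⟨S, hS, hSl⟩ := exists_superset_card_eq hcard (by simpa using hln)
  obtain ⟨x, hxB, hx⟩ := hB S hSl (S.filter fun j => 0 ≤ u j) (filter_subset _ _)
  have h0 := hu x hxB
  have h1 : ∑ j ∈ S, boolSign (x j) * u j = ∑ j ∈ S, |u j| := by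
    refine sum_congr rfl fun j hjS => ?_
    rw [hx j hjS]
    by_cases h : 0 ≤ u j
    · simp [boolSign, hjS, h, abs_of_nonneg]
    · simp [boolSign, hjS, h, abs_of_neg (not_le.1 h)]
  have h2 : M ≤ ∑ j ∈ S, |u j| := by
    rw [← hj]
    refine single_le_sum (f := fun j => |u j|) (fun j _ => abs_nonneg _) (hS ?_)
    simp only [mem_filter, mem_univ, true_and, hj]
    exact div_le_self hM.le (by exact_mod_cast (by omega : 1 ≤ n))
  have h3 : |∑ j ∈ Sᶜ, boolSign (x j) * u j| ≤ (n - l) * (M / n) := by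
    refine (abs_sum_le_sum_abs _ _).trans ?_
    refine (sum_le_card_nsmul _ _ (M / n) fun j hjS => ?_).trans (le_of_eq ?_)
    · rw [abs_mul, abs_boolSign, one_mul]
      by_contra! h
      exact (mem_compl.1 hjS) (hS (by simp [h.le]))
    · rw [card_compl, hSl, Fintype.card_fin, nsmul_eq_mul, Nat.cast_sub hln]
  have h4 : ((n : ℝ) - l) * (M / n) < M := by
    rw [← mul_div_assoc, div_lt_iff₀ hn]
    have : (0 : ℝ) < l := by exact_mod_cast hl
    nlinarith
  rw [← sum_add_sum_compl S, h1] at h0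
  linarith [neg_abs_le (∑ j ∈ Sᶜ, boolSign (x j) * u j)]

end Pattern
section Probability

/-- The probability of an event under the uniform distribution. -/
noncomputable def pr {Ω : Type*} [Fintype Ω] (p : Ω → Prop) : ℝ :=
  (Nat.card {ω // p ω} : ℝ) / Fintype.card Ω

variable {Ω : Type*} [Fintype Ω]

open Classical in
lemma pr_eq_expect (p : Ω → Prop) : pr p = 𝔼 ω, if p ω then (1 : ℝ) else 0 := by
  rw [pr, Fintype.expect_eq_sum_div_card, Finset.sum_boole, Nat.card_eq_fintype_card,
    Fintype.card_subtype]

lemma pr_mono {p q : Ω → Prop} (h : ∀ ω, p ω → q ω) : pr p ≤ pr q := by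
  unfold pr
  gcongr
  exact Nat.card_le_card_of_injective (Subtype.map id h)
    (Subtype.map_injective _ Function.injective_id)

lemma pr_or_le (p q : Ω → Prop) : pr (fun ω => p ω ∨ q ω) ≤ pr p + pr q := by
  classical
  simp only [pr_eq_expect, ← expect_add_distrib]
  refine expect_le_expect fun ω _ => ?_
  by_cases hp : p ω <;> by_cases hq : q ω <;> simp [hp, hq]

lemma pr_exists_le {κ : Type*} (s : Finset κ) (p : κ → Ω → Prop) :
    pr (fun ω => ∃ i ∈ s, p i ω) ≤ ∑ i ∈ s, pr (p i) := by
  classical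
  induction s using Finset.induction_on with
  | empty => simp [pr]
  | insert a s ha ih =>
    rw [sum_insert ha]
    refine le_trans ?_ ((pr_or_le (p a) fun ω => ∃ i ∈ s, p i ω).trans (by gcongr))
    exact pr_mono fun ω h => by simpa using h

lemma pr_add_pr_not [Nonempty Ω] (p : Ω → Prop) : pr p + pr (fun ω => ¬p ω) = 1 := by
  classical
  simp only [pr_eq_expect, ← expect_add_distrib]
  rw [← Fintype.expect_one (ι := Ω) (M := ℝ)]
  refine expect_congr rfl fun ω _ => ?_
  by_cases hp : p ω <;> simp [hp]

lemma pr_le_expect_div {f : Ω → ℝ} (hf : ∀ ω, 0 ≤ f ω) {c : ℝ} (hc : 0 < c) :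
    pr (fun ω => c ≤ f ω) ≤ (𝔼 ω, f ω) / c := by
  classical
  rw [pr_eq_expect, expect_div]
  refine expect_le_expect fun ω _ => ?_
  split_ifs with h
  · rwa [one_le_div hc]
  · exact div_nonneg (hf ω) hc.le

lemma pr_forall {ι : Type*} [Fintype ι] [DecidableEq ι] {α : Type*} [Fintype α]
    (p : ι → α → Prop) : pr (fun b : ι → α => ∀ i, p i (b i)) = ∏ i, pr (p i) := by
  unfold pr
  rw [Nat.card_congr (Equiv.subtypePiEquivPi), Nat.card_pi, prod_div_distrib, Fintype.card_fun]
  simp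

/-- Resampling one coordinate of a uniform vector does not change its distribution. -/
lemma expect_update {ι : Type*} [Fintype ι] [DecidableEq ι] {α : Type*} [Fintype α] [Nonempty α]
    (d : ι) (f : (ι → α) → ℝ) : 𝔼 b, f b = 𝔼 b, 𝔼 x, f (Function.update b d x) := by
  have hinv : Function.Involutive
      fun z : (ι → α) × α => (Function.update z.1 d z.2, z.1 d) := by
    rintro ⟨b, x⟩
    simp
  have h := Fintype.expect_equiv hinv.toPerm (fun z : (ι → α) × α => f z.1)
    (fun z => f (Function.update z.1 d z.2)) (by
      rintro ⟨b, x⟩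
      simp [Function.Involutive.toPerm])
  rw [← univ_product_univ, expect_product, expect_product] at h
  simpa using h

lemma pr_le_of_update {ι : Type*} [Fintype ι] [DecidableEq ι] {α : Type*} [Fintype α] [Nonempty α]
    (d : ι) (p : (ι → α) → Prop) {c : ℝ}
    (h : ∀ b, pr (fun x => p (Function.update b d x)) ≤ c) : pr p ≤ c := by
  classical
  rw [pr_eq_expect, expect_update d]
  refine expect_le univ_nonempty fun b _ => ?_
  simpa only [pr_eq_expect] using h b

lemma pr_abs_sum_boolSign_lt_le {ι : Type*} [Fintype ι] [DecidableEq ι] (u : ι → ℝ) {ε : ℝ} (m : ℕ)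
    (hu : ∃ T : Finset ι, T.card = 2 * m ∧ ∀ i ∈ T, ε ≤ |u i|) :
    pr (fun x : ι → Bool => |∑ i, boolSign (x i) * u i| < ε) ≤ 1 / √(2 * m + 1) := by
  obtain ⟨T, hT, hu⟩ := hu
  have h1 := card_abs_sum_boolSign_lt_le u T hu
  have hle : 2 * m ≤ Fintype.card ι := hT ▸ card_le_univ T
  rw [hT, Nat.mul_div_cancel_left _ two_pos, ← Nat.centralBinom_eq_two_mul_choose] at h1
  have h2 : √(2 * m + 1) * m.centralBinom ≤ (4 : ℝ) ^ m := by
    refine abs_le_of_sq_le_sq' ?_ (by positivity) |>.2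
    rw [mul_pow, Real.sq_sqrt (by positivity), ← pow_mul, mul_comm m 2, pow_mul]
    norm_num
    exact_mod_cast mul_centralBinom_sq_le m
  rw [pr, div_le_div_iff₀ (by positivity) (by positivity), one_mul, Fintype.card_fun,
    Fintype.card_bool]
  have h3 : (2 : ℝ) ^ Fintype.card ι = 4 ^ m * 2 ^ (Fintype.card ι - 2 * m) := by
    rw [show (4 : ℝ) = 2 ^ 2 by norm_num, ← pow_mul, ← pow_add]
    congr 1
    omega
  push_cast
  rw [h3]
  calc _ ≤ ((m.centralBinom * 2 ^ (Fintype.card ι - 2 * m) : ℕ) : ℝ) * √(2 * m + 1) := by gcongr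
    _ = (√(2 * m + 1) * m.centralBinom) * 2 ^ (Fintype.card ι - 2 * m) := by push_cast; ring
    _ ≤ _ := by gcongr

end Probability

section SignQuadraticForm

variable {n : ℕ}

/-- The vector of real signs attached to a vector of Booleans. -/
noncomputable def signVec (x : Fin n → Bool) : Fin n → ℝ := fun i => boolSign (x i)

lemma dotProduct_signVec_sub_trace (Q : Matrix (Fin n) (Fin n) ℝ) (x : Fin n → Bool) :
    signVec x ⬝ᵥ Q *ᵥ signVec x - Q.trace =
      ∑ i, ∑ j, (if i = j then 0 else Q i j) * (boolSign (x i) * boolSign (x j)) := by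
  simp only [dotProduct, Matrix.mulVec, Matrix.trace, Matrix.diag_apply, mul_sum,
    ← sum_sub_distrib]
  refine sum_congr rfl fun i _ => ?_
  have : Q i i = ∑ j, if i = j then Q i j else 0 := by simp
  rw [this, ← sum_sub_distrib]
  refine sum_congr rfl fun j _ => ?_
  split_ifs with h
  · subst h
    simp only [signVec]
    linear_combination Q i i * boolSign_sq (x i)
  · simp only [signVec]
    ring

lemma sum_sq_offDiag_le {Q : Matrix (Fin n) (Fin n) ℝ} (hT : Qᵀ = Q) (hQ : Q * Q = Q) :
    ∑ i, ∑ j, (if i = j then 0 else Q i j) ^ 2 ≤ Q.trace := by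
  rw [← sum_sq_proj hT hQ]
  refine sum_le_sum fun i _ => sum_le_sum fun j _ => ?_
  split_ifs
  · simpa using sq_nonneg (Q i j)
  · exact le_rfl

lemma expect_abs_sub_trace_le {Q : Matrix (Fin n) (Fin n) ℝ} (hT : Qᵀ = Q) (hQ : Q * Q = Q) :
    𝔼 x : Fin n → Bool, |signVec x ⬝ᵥ Q *ᵥ signVec x - Q.trace| ≤ √(2 * Q.trace) := by
  refine Real.le_sqrt_of_sq_le ?_
  have h := expect_mul_sq_le (fun x : Fin n → Bool => |signVec x ⬝ᵥ Q *ᵥ signVec x - Q.trace|)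
    (fun _ => 1)
  simp only [mul_one, one_pow, Fintype.expect_one, sq_abs] at h
  refine h.trans ?_
  simp only [dotProduct_signVec_sub_trace]
  rw [expect_quadraticForm_sq (fun i j => if i = j then 0 else Q i j) (by simp)
    (fun i j => by
      by_cases h : i = j
      · simp [h]
      · simp only [h, Ne.symm h, if_false]
        conv_lhs => rw [← hT]
        rfl)]
  gcongr
  exact sum_sq_offDiag_le hT hQ

lemma pr_lt_half_trace_le {Q : Matrix (Fin n) (Fin n) ℝ} (hT : Qᵀ = Q) (hQ : Q * Q = Q)
    (hpos : 0 < Q.trace) :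
    pr (fun x : Fin n → Bool => signVec x ⬝ᵥ Q *ᵥ signVec x < Q.trace / 2) ≤
      1728 / Q.trace ^ 2 := by
  have h4 : 𝔼 x : Fin n → Bool, (signVec x ⬝ᵥ Q *ᵥ signVec x - Q.trace) ^ 4 ≤
      108 * Q.trace ^ 2 := by
    simp only [dotProduct_signVec_sub_trace]
    refine (expect_quadraticForm_pow_four_le (fun i j => if i = j then 0 else Q i j) (by simp)
      (fun i j => by
        by_cases h : i = j
        · simp [h]
        · simp only [h, Ne.symm h, if_false]
          conv_lhs => rw [← hT]
          rfl) univ).trans ?_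
    have := sum_sq_offDiag_le hT hQ
    have h0 : 0 ≤ ∑ i, ∑ j, (if i = j then 0 else Q i j) ^ 2 := by positivity
    nlinarith
  calc _ ≤ pr (fun x : Fin n → Bool =>
        (Q.trace / 2) ^ 4 ≤ (signVec x ⬝ᵥ Q *ᵥ signVec x - Q.trace) ^ 4) := by
        refine pr_mono fun x hx => ?_
        rw [← Even.pow_abs (show Even 4 by decide) (signVec x ⬝ᵥ Q *ᵥ signVec x - Q.trace)]
        gcongr
        rw [le_abs]
        right
        linarith
    _ ≤ _ := pr_le_expect_div (fun x => by positivity) (by positivity)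
    _ ≤ 108 * Q.trace ^ 2 / (Q.trace / 2) ^ 4 := by gcongr
    _ = _ := by field_simp; norm_num

lemma pr_lt_inv_pow_le_of_pattern {Q : Matrix (Fin n) (Fin n) ℝ} (hT : Qᵀ = Q) (hQ : Q * Q = Q)
    {m : ℕ} (hm : 0 < m) (hmn : 2 * m ≤ n)
    (hpos : 0 < Q.trace) (B : Set (Fin n → Bool))
    (hB : ∀ S : Finset (Fin n), S.card = 2 * m → ∀ τ ⊆ S,
      ∃ x ∈ B, ∀ j ∈ S, x j = decide (j ∈ τ))
    (hBQ : ∀ x ∈ B, Q *ᵥ signVec x = 0) :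
    pr (fun x : Fin n → Bool => signVec x ⬝ᵥ Q *ᵥ signVec x < 1 / (n : ℝ) ^ 3) ≤
      1 / √(2 * m + 1) := by
  have hn : (0 : ℝ) < n := by exact_mod_cast (by omega : 0 < n)
  obtain ⟨k, hk⟩ : ∃ k, Q k k ≠ 0 := by
    by_contra! h
    simp [Matrix.trace, h] at hpos
  set u : Fin n → ℝ := fun i => Q i k with hu
  have hQu : Q *ᵥ u = u := by
    funext i
    conv_rhs => rw [hu, ← hQ]
    rfl
  obtain ⟨j₀, -, hj₀⟩ := exists_max_image univ (fun j => |u j|) ⟨k, mem_univ k⟩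
  have hM : 0 < |u j₀| := (abs_pos.2 hk).trans_le (hj₀ k (mem_univ k))
  have hcard := lt_card_filter_of_pattern (by omega) hmn B hB u (by
    intro x hx
    change signVec x ⬝ᵥ u = 0
    rw [← hQu, Matrix.dotProduct_mulVec, ← Matrix.mulVec_transpose, hT, hBQ x hx,
      zero_dotProduct]) hM j₀ rfl
  obtain ⟨T, hTsub, hTc⟩ := exists_subset_card_eq hcard.le
  refine le_trans (pr_mono fun x hx => ?_)
    (pr_abs_sum_boolSign_lt_le u (ε := |u j₀| / n) m
      ⟨T, hTc, fun i hi => (mem_filter.1 (hTsub hi)).2⟩)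
  have h1 := sq_dotProduct_le_of_proj hT hQ (signVec x) u hQu
  have h2 : ∑ i, u i ^ 2 ≤ n * |u j₀| ^ 2 := by
    refine (sum_le_card_nsmul univ _ (|u j₀| ^ 2) fun i _ => ?_).trans (by simp)
    rw [← sq_abs]
    exact pow_le_pow_left₀ (abs_nonneg _) (hj₀ i (mem_univ i)) 2
  have h0 : 0 < ∑ i, u i ^ 2 :=
    lt_of_lt_of_le (by positivity : 0 < |u j₀| ^ 2) (by
      rw [sq_abs]
      exact single_le_sum (f := fun i => u i ^ 2) (fun i _ => sq_nonneg _) (mem_univ j₀))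
  change |signVec x ⬝ᵥ u| < _
  refine abs_lt_of_sq_lt_sq ?_ (by positivity)
  calc _ ≤ _ := h1
    _ < 1 / (n : ℝ) ^ 3 * ∑ i, u i ^ 2 := by gcongr
    _ ≤ 1 / (n : ℝ) ^ 3 * (n * |u j₀| ^ 2) := by gcongr
    _ = _ := by field_simp

end SignQuadraticForm

section RandomRows

variable {n : ℕ}

/-- The rows of the sign matrix of `b`, extended by zero. -/
noncomputable def signRows (b : Fin n → Fin n → Bool) (i : ℕ) : Fin n → ℝ :=
  if h : i < n then signVec (b ⟨i, h⟩) else 0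

/-- The squared length of the projection of row `i` by `kerProj` of the preceding rows. -/
noncomputable def distSq (b : Fin n → Fin n → Bool) (i : ℕ) : ℝ :=
  signRows b i ⬝ᵥ kerProj (rowMatrix (signRows b) i) *ᵥ signRows b i

lemma rowMatrix_signRows_update (b : Fin n → Fin n → Bool) (d : Fin n) (x : Fin n → Bool) :
    rowMatrix (signRows (Function.update b d x)) d = rowMatrix (signRows b) d := by
  ext i j
  have hi : (i : ℕ) < n := i.2.trans d.2
  have hne : (⟨i, hi⟩ : Fin n) ≠ d := fun h => i.2.ne (congrArg Fin.val h)
  simp [rowMatrix, signRows, hi, hne]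

lemma distSq_update (b : Fin n → Fin n → Bool) (d : Fin n) (x : Fin n → Bool) :
    distSq (Function.update b d x) d =
      signVec x ⬝ᵥ kerProj (rowMatrix (signRows b) d) *ᵥ signVec x := by
  rw [distSq, rowMatrix_signRows_update]
  simp [signRows]

lemma signMatrix_det_sq (b : Fin n → Fin n → Bool) :
    (signMatrix n b).det ^ 2 = gramDet (signRows b) n := by
  have : rowMatrix (signRows b) n = signMatrix n b := by
    ext i j
    simp [rowMatrix, signRows, signMatrix, signVec, boolSign]
  rw [gramDet, this, Matrix.det_mul, Matrix.det_transpose, sq]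

lemma trace_kerProj_sub {k : ℕ} (hk : k ≤ n) (A : Matrix (Fin (n - k)) (Fin n) ℝ) :
    (kerProj A).trace = k := by
  rw [trace_kerProj (Nat.sub_le n k), Nat.cast_sub hk]
  ring

lemma expect_abs_distSq_sub_le {k : ℕ} (hk : 1 ≤ k) (hkn : k ≤ n) :
    𝔼 b : Fin n → Fin n → Bool, |distSq b (n - k) - k| ≤ √(2 * k) := by
  have hd : n - k < n := by omega
  rw [expect_update ⟨n - k, hd⟩]
  refine expect_le univ_nonempty fun b _ => ?_
  have h := expect_abs_sub_trace_le (kerProj_transpose (rowMatrix (signRows b) (n - k)))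
    (kerProj_mul_self _)
  rw [trace_kerProj_sub hkn] at h
  refine le_trans (le_of_eq (expect_congr rfl fun x _ => ?_)) h
  rw [distSq_update b ⟨n - k, hd⟩ x]

lemma pr_distSq_lt_half_le {k : ℕ} (hk : 1 ≤ k) (hkn : k ≤ n) :
    pr (fun b : Fin n → Fin n → Bool => distSq b (n - k) < k / 2) ≤ 1728 / (k : ℝ) ^ 2 := by
  have hd : n - k < n := by omega
  refine pr_le_of_update ⟨n - k, hd⟩ _ fun b => ?_
  have h := pr_lt_half_trace_le (kerProj_transpose (rowMatrix (signRows b) (n - k)))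
    (kerProj_mul_self _) (by rw [trace_kerProj_sub hkn]; exact_mod_cast hk)
  rw [trace_kerProj_sub hkn] at h
  refine le_trans (pr_mono fun x hx => ?_) h
  rwa [distSq_update b ⟨n - k, hd⟩ x] at hx

/-- All sign patterns on `l` columns occur among the first `n - K` rows. -/
def HasPatterns (K l : ℕ) (b : Fin n → Fin n → Bool) : Prop :=
  ∀ S : Finset (Fin n), S.card = l → ∀ τ ⊆ S,
    ∃ i : Fin n, i + K < n ∧ ∀ j ∈ S, b i j = decide (j ∈ τ)

lemma pr_eqOn (S τ : Finset (Fin n)) :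
    pr (fun x : Fin n → Bool => ∀ j ∈ S, x j = decide (j ∈ τ)) = (1 / 2) ^ S.card := by
  rw [pr_forall (fun j (c : Bool) => j ∈ S → c = decide (j ∈ τ))]
  rw [prod_congr rfl (g := fun j => if j ∈ S then (1 / 2 : ℝ) else 1)]
  · rw [prod_ite_mem, univ_inter, prod_const]
  · intro j _
    split_ifs with h <;> simp [pr, h]

lemma pr_forall_not_eqOn {K : ℕ} (hK : K ≤ n) (S τ : Finset (Fin n)) :
    pr (fun b : Fin n → Fin n → Bool =>
      ∀ i : Fin n, i + K < n → ¬∀ j ∈ S, b i j = decide (j ∈ τ)) =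
      (1 - (1 / 2) ^ S.card) ^ (n - K) := by
  rw [pr_forall (fun (i : Fin n) (x : Fin n → Bool) =>
    i + K < n → ¬∀ j ∈ S, x j = decide (j ∈ τ))]
  have h1 := pr_add_pr_not (fun x : Fin n → Bool => ∀ j ∈ S, x j = decide (j ∈ τ))
  rw [pr_eqOn] at h1
  rw [prod_congr rfl (g := fun i : Fin n => if (i : ℕ) < n - K then
    (1 - (1 / 2) ^ S.card : ℝ) else 1)]
  · rw [Fin.prod_univ_eq_prod_range (fun i => if i < n - K then
      (1 - (1 / 2) ^ S.card : ℝ) else 1) n, ← prod_filter, prod_const]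
    congr 1
    have : (range n).filter (fun i => i < n - K) = range (n - K) := by
      ext i
      simp only [mem_filter, mem_range]
      omega
    rw [this, card_range]
  · intro i _
    by_cases h : (i : ℕ) + K < n
    · rw [if_pos (by omega)]
      simp only [h, true_imp_iff]
      linarith
    · rw [if_neg (by omega)]
      simp [h, pr]

lemma pr_not_hasPatterns_le {K : ℕ} (hK : K ≤ n) (l : ℕ) :
    pr (fun b : Fin n → Fin n → Bool => ¬HasPatterns K l b) ≤
      n ^ l * 2 ^ l * (1 - (1 / 2) ^ l) ^ (n - K) := by
  have h0 : (0 : ℝ) ≤ (1 - (1 / 2) ^ l) ^ (n - K) :=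
    pow_nonneg (sub_nonneg.2 (pow_le_one₀ (by norm_num) (by norm_num))) _
  calc _ ≤ pr (fun b : Fin n → Fin n → Bool => ∃ S ∈ powersetCard l univ, ∃ τ ∈ S.powerset,
        ∀ i : Fin n, i + K < n → ¬∀ j ∈ S, b i j = decide (j ∈ τ)) := by
        refine pr_mono fun b hb => ?_
        unfold HasPatterns at hb
        push Not at hb
        obtain ⟨S, hS, τ, hτ, h⟩ := hb
        refine ⟨S, mem_powersetCard.2 ⟨subset_univ _, hS⟩, τ, mem_powerset.2 hτ, fun i hi h' => ?_⟩
        obtain ⟨j, hj, hne⟩ := h i hi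
        exact hne (h' j hj)
    _ ≤ ∑ S ∈ powersetCard l (univ : Finset (Fin n)), ∑ τ ∈ S.powerset,
          (1 - (1 / 2) ^ l : ℝ) ^ (n - K) := by
        refine (pr_exists_le _ _).trans (sum_le_sum fun S hS => ?_)
        refine (pr_exists_le _ _).trans (sum_le_sum fun τ _ => ?_)
        rw [pr_forall_not_eqOn hK, (mem_powersetCard.1 hS).2]
    _ = n.choose l * 2 ^ l * (1 - (1 / 2) ^ l : ℝ) ^ (n - K) := by
        rw [sum_congr rfl (g := fun _ => 2 ^ l * (1 - (1 / 2) ^ l : ℝ) ^ (n - K))]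
        · simp [mul_assoc]
        · intro S hS
          simp [(mem_powersetCard.1 hS).2]
    _ ≤ _ := by
        gcongr
        exact_mod_cast Nat.choose_le_pow n l

lemma pr_hasPatterns_and_distSq_lt_le {K k m : ℕ} (hk : 1 ≤ k) (hkK : k ≤ K) (hkn : k ≤ n)
    (hm : 0 < m) (hmn : 2 * m ≤ n) :
    pr (fun b : Fin n → Fin n → Bool =>
      HasPatterns K (2 * m) b ∧ distSq b (n - k) < 1 / (n : ℝ) ^ 3) ≤ 1 / √(2 * m + 1) := by
  have hd : n - k < n := by omega
  have hn : (1 : ℝ) ≤ n := by exact_mod_cast (by omega : 1 ≤ n)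
  refine pr_le_of_update ⟨n - k, hd⟩ _ fun b => ?_
  set A := rowMatrix (signRows b) (n - k) with hA
  by_cases hG : HasPatterns K (2 * m) b ∧ (A * Aᵀ).det ≠ 0
  · obtain ⟨hG, hdet⟩ := hG
    refine le_trans (pr_mono fun x hx => ?_) (pr_lt_inv_pow_le_of_pattern
      (kerProj_transpose A) (kerProj_mul_self A) hm hmn
      (by rw [trace_kerProj_sub hkn]; exact_mod_cast hk)
      {x | ∃ i : Fin n, i + K < n ∧ b i = x} ?_ ?_)
    · have := hx.2
      rwa [distSq_update b ⟨n - k, hd⟩ x] at this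
    · intro S hS τ hτ
      obtain ⟨i, hi, h⟩ := hG S hS τ hτ
      exact ⟨b i, ⟨i, hi, rfl⟩, h⟩
    · rintro _ ⟨i, hi, rfl⟩
      have h0 := mul_kerProj A hdet
      rw [← Matrix.transpose_eq_zero, Matrix.transpose_mul, kerProj_transpose] at h0
      funext j
      have := congrFun (congrFun h0 j) ⟨i, by omega⟩
      simpa [Matrix.mul_apply, Matrix.mulVec, dotProduct, hA, rowMatrix, signRows] using this
  · refine le_trans (le_of_eq ?_) (by positivity : (0 : ℝ) ≤ 1 / √(2 * m + 1))
    rw [pr, div_eq_zero_iff]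
    left
    rw [Nat.cast_eq_zero, Nat.card_eq_zero]
    left
    refine ⟨fun ⟨x, hx1, hx2⟩ => hG ⟨?_, fun hdet => ?_⟩⟩
    · intro S hS τ hτ
      obtain ⟨i, hi, h⟩ := hx1 S hS τ hτ
      refine ⟨i, hi, ?_⟩
      rwa [Function.update_of_ne (fun h' => by have := congrArg Fin.val h'; simp at this; omega)]
        at h
    · rw [distSq_update b ⟨n - k, hd⟩ x] at hx2
      have htr := trace_kerProj_sub hkn A
      have hq := dotProduct_signVec_sub_trace (kerProj A) x
      rw [htr] at hq
      have hz : ∑ i, ∑ j, (if i = j then 0 else kerProj A i j) *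
          (boolSign (x i) * boolSign (x j)) = 0 := by
        refine sum_eq_zero fun i _ => sum_eq_zero fun j _ => ?_
        split_ifs with hij
        · simp
        · rw [kerProj, if_pos hdet, Matrix.diagonal_apply_ne _ hij, zero_mul]
      rw [hz] at hq
      have : (1 : ℝ) ≤ k := by exact_mod_cast hk
      have h3 : 1 / (n : ℝ) ^ 3 ≤ 1 := by
        rw [div_le_one (by positivity)]
        exact one_le_pow₀ hn
      simp only [← hA] at hx2
      linarith

lemma sum_inv_sqrt_le (n : ℕ) : ∑ k ∈ Icc 1 n, √(2 * k) / k ≤ 3 * √n := by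
  have key : ∑ k ∈ Icc 1 n, 1 / √k ≤ 2 * √n := by
    induction n with
    | zero => simp
    | succ n ih =>
      rw [sum_Icc_succ_top (by omega)]
      have h1 : √(n : ℝ) ^ 2 = n := Real.sq_sqrt (by positivity)
      have h2 : √((n + 1 : ℕ) : ℝ) ^ 2 = n + 1 := by
        rw [Real.sq_sqrt (by positivity)]
        push_cast
        ring
      have h3 : 0 < √((n + 1 : ℕ) : ℝ) := by positivity
      have h4 : 0 ≤ √(n : ℝ) := by positivity
      have h5 : 1 / √((n + 1 : ℕ) : ℝ) ≤ 2 * √((n + 1 : ℕ) : ℝ) - 2 * √(n : ℝ) := by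
        rw [div_le_iff₀ h3]
        nlinarith [sq_nonneg (√((n + 1 : ℕ) : ℝ) - √(n : ℝ))]
      linarith
  have h2 : √2 ≤ (3 / 2 : ℝ) := Real.sqrt_le_iff.2 ⟨by norm_num, by norm_num⟩
  calc _ = √2 * ∑ k ∈ Icc 1 n, 1 / √k := by
        rw [mul_sum]
        refine sum_congr rfl fun k hk => ?_
        have : (0 : ℝ) < k := by exact_mod_cast (mem_Icc.1 hk).1
        rw [Real.sqrt_mul (by norm_num), mul_div_assoc, Real.sqrt_div_self', one_div]
    _ ≤ 3 / 2 * (2 * √n) := by gcongr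
    _ = _ := by ring

lemma pr_le_sum_abs_distSq_sub_le {t : ℝ} (ht : 0 < t) :
    pr (fun b : Fin n → Fin n → Bool => t ≤ ∑ k ∈ Icc 1 n, |distSq b (n - k) - k| / k) ≤
      3 * √n / t := by
  refine (pr_le_expect_div (fun b => by positivity) ht).trans ?_
  gcongr
  refine le_trans ?_ (sum_inv_sqrt_le n)
  rw [expect_sum_comm]
  refine sum_le_sum fun k hk => ?_
  rw [← expect_div]
  gcongr
  exact expect_abs_distSq_sub_le (mem_Icc.1 hk).1 (mem_Icc.1 hk).2

lemma mul_exp_neg_le_of_half_le {k q : ℝ} (hk : 0 < k) (hq : k / 2 ≤ q) :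
    k * Real.exp (-(2 * (|q - k| / k))) ≤ q := by
  obtain ⟨t, rfl⟩ : ∃ t, q = k * (1 + t) := ⟨q / k - 1, by field_simp; ring⟩
  have h1 : |k * (1 + t) - k| / k = |t| := by
    rw [show k * (1 + t) - k = k * t by ring, abs_mul, abs_of_pos hk]
    field_simp
  have ht : -(1 / 2) ≤ t := by
    by_contra! h
    nlinarith
  rw [h1]
  refine mul_le_mul_of_nonneg_left ?_ hk.le
  rcases le_total 0 t with h | h
  · refine (Real.exp_le_one_iff.2 ?_).trans (by linarith)
    have := abs_nonneg t
    linarith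
  · rw [abs_of_nonpos h, Real.exp_neg, inv_le_comm₀ (Real.exp_pos _) (by linarith)]
    refine le_trans ?_ (Real.add_one_le_exp _)
    rw [inv_le_iff_one_le_mul₀ (by linarith)]
    nlinarith

lemma sqrt_factorial_mul_exp_le_abs_det {K : ℕ} (hn : 1 ≤ n) (b : Fin n → Fin n → Bool) {t : ℝ}
    (h1 : ∑ k ∈ Icc 1 n, |distSq b (n - k) - k| / k ≤ t)
    (h2 : ∀ k ∈ Icc 1 n, K < k → k / 2 ≤ distSq b (n - k))
    (h3 : ∀ k ∈ Icc 1 n, k ≤ K → 1 / (n : ℝ) ^ 3 ≤ distSq b (n - k)) :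
    √(n.factorial) * Real.exp (-(t + 2 * K * Real.log n)) ≤ |(signMatrix n b).det| := by
  have hn0 : (0 : ℝ) < n := by exact_mod_cast hn
  have hlog : 0 ≤ Real.log n := Real.log_natCast_nonneg n
  let e : ℕ → ℝ := fun k => 2 * (|distSq b (n - k) - k| / k) + if k ≤ K then 4 * Real.log n else 0
  have hterm : ∀ k ∈ Icc 1 n, k * Real.exp (-(e k)) ≤ distSq b (n - k) := by
    intro k hk
    have hk0 : (0 : ℝ) < k := by exact_mod_cast (mem_Icc.1 hk).1
    have hkn : (k : ℝ) ≤ n := by exact_mod_cast (mem_Icc.1 hk).2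
    by_cases hK : k ≤ K
    · refine le_trans ?_ (h3 k hk hK)
      calc k * Real.exp (-(e k)) ≤ n * Real.exp (-(4 * Real.log n)) := by
            gcongr
            simp only [e, if_pos hK]
            have : 0 ≤ |distSq b (n - k) - k| / k := by positivity
            linarith
        _ = 1 / (n : ℝ) ^ 3 := by
            rw [Real.exp_neg, show 4 * Real.log n = Real.log ((n : ℝ) ^ 4) by simp,
              Real.exp_log (by positivity)]
            field_simp
    · simp only [e, if_neg hK, add_zero]
      exact mul_exp_neg_le_of_half_le hk0 (h2 k hk (not_le.1 hK))
  have hpos : ∀ i < n, 0 < distSq b i := by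
    intro i hi
    have := hterm (n - i) (mem_Icc.2 ⟨by omega, by omega⟩)
    rw [Nat.sub_sub_self hi.le] at this
    refine lt_of_lt_of_le ?_ this
    have : (0 : ℝ) < (n - i : ℕ) := by exact_mod_cast (by omega : 0 < n - i)
    positivity
  have hprod : (signMatrix n b).det ^ 2 = ∏ k ∈ Icc 1 n, distSq b (n - k) := by
    rw [signMatrix_det_sq, (gramDet_eq_prod (signRows b) n hpos).2]
    refine prod_nbij' (fun i => n - i) (fun k => n - k) ?_ ?_ ?_ ?_ ?_
    · intro i hi
      simp only [mem_range, mem_Icc] at *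
      omega
    · intro i hi
      simp only [mem_range, mem_Icc] at *
      omega
    · intro i hi
      simp only [mem_range] at hi
      omega
    · intro i hi
      simp only [mem_Icc] at hi
      omega
    · intro i hi
      rw [Nat.sub_sub_self (mem_range.1 hi).le]
      rfl
  have he : ∑ k ∈ Icc 1 n, e k ≤ 2 * (t + 2 * K * Real.log n) := by
    simp only [e, sum_add_distrib, ← mul_sum]
    have : ∑ k ∈ Icc 1 n, (if k ≤ K then 4 * Real.log n else 0) ≤ K * (4 * Real.log n) := by
      rw [← sum_filter, sum_const, nsmul_eq_mul]
      gcongr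
      calc _ ≤ (Icc 1 K).card := card_le_card fun k hk => by
            simp only [mem_filter, mem_Icc] at *
            omega
        _ = K := by simp
    linarith
  have hfac : ∏ k ∈ Icc 1 n, (k : ℝ) = n.factorial := by
    rw [← prod_Ico_id_eq_factorial, Ico_add_one_right_eq_Icc]
    push_cast
    rfl
  refine abs_le_of_sq_le_sq' ?_ (abs_nonneg _) |>.2
  rw [sq_abs, hprod, mul_pow, Real.sq_sqrt (by positivity), ← Real.exp_nat_mul]
  refine le_trans ?_ (prod_le_prod (fun k _ => by positivity) hterm)
  rw [prod_mul_distrib, ← Real.exp_sum, sum_neg_distrib, hfac]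
  push_cast
  gcongr
  linarith

lemma pr_lt_half_union_le {K : ℕ} (hK : 1 ≤ K) (hKn : K ≤ n) :
    pr (fun b : Fin n → Fin n → Bool => ∃ k ∈ Ioc K n, distSq b (n - k) < k / 2) ≤ 1728 / K := by
  calc _ ≤ ∑ k ∈ Ioc K n, 1728 / (k : ℝ) ^ 2 := by
        refine (pr_exists_le _ _).trans (sum_le_sum fun k hk => ?_)
        have := mem_Ioc.1 hk
        exact pr_distSq_lt_half_le (by omega) this.2
    _ = 1728 * ∑ k ∈ Ioc K n, ((k : ℝ) ^ 2)⁻¹ := by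
        rw [mul_sum]
        exact sum_congr rfl fun k _ => div_eq_mul_inv _ _
    _ ≤ 1728 * (K : ℝ)⁻¹ := by
        gcongr
        refine (sum_Ioc_inv_sq_le_sub (by omega) hKn).trans ?_
        have : (0 : ℝ) ≤ (n : ℝ)⁻¹ := by positivity
        linarith
    _ = _ := (div_eq_mul_inv _ _).symm

lemma pr_hasPatterns_union_le {K m : ℕ} (hKn : K ≤ n) (hm : 0 < m) (hmn : 2 * m ≤ n) :
    pr (fun b : Fin n → Fin n → Bool => ∃ k ∈ Icc 1 K,
      HasPatterns K (2 * m) b ∧ distSq b (n - k) < 1 / (n : ℝ) ^ 3) ≤ K / √(2 * m + 1) := by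
  refine (pr_exists_le _ _).trans ((sum_le_sum fun k hk => ?_).trans_eq
    (b := ∑ k ∈ Icc 1 K, 1 / √(2 * m + 1)) ?_)
  · have := mem_Icc.1 hk
    exact pr_hasPatterns_and_distSq_lt_le this.1 this.2 (by omega) hm hmn
  · simp [div_eq_mul_inv]

lemma pr_not_sqrt_factorial_mul_exp_le_abs_det_le {K m : ℕ} (hn : 1 ≤ n) (hK : 1 ≤ K)
    (hKn : K ≤ n) (hm : 0 < m) (hmn : 2 * m ≤ n) {t : ℝ} (ht : 0 < t) :
    pr (fun b : Fin n → Fin n → Bool => ¬√(n.factorial) *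
        Real.exp (-(t + 2 * K * Real.log n)) ≤ |(signMatrix n b).det|) ≤
      3 * √n / t + (1728 / K + (n ^ (2 * m) * 2 ^ (2 * m) * (1 - (1 / 2) ^ (2 * m)) ^ (n - K) +
        K / √(2 * m + 1))) := by
  refine le_trans ?_ (add_le_add (pr_le_sum_abs_distSq_sub_le ht) (add_le_add
    (pr_lt_half_union_le hK hKn) (add_le_add (pr_not_hasPatterns_le hKn (2 * m))
      (pr_hasPatterns_union_le hKn hm hmn))))
  refine le_trans (pr_mono fun b hb => ?_) ((pr_or_le _ _).trans (add_le_add le_rfl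
    ((pr_or_le _ _).trans (add_le_add le_rfl (pr_or_le _ _)))))
  by_contra! h
  obtain ⟨h1, h2, h3, h4⟩ := h
  refine hb (sqrt_factorial_mul_exp_le_abs_det hn b h1.le ?_ ?_)
  · intro k hk hkK
    exact h2 k (mem_Ioc.2 ⟨hkK, (mem_Icc.1 hk).2⟩)
  · intro k hk hkK
    exact h4 k (mem_Icc.2 ⟨(mem_Icc.1 hk).1, hkK⟩) h3

end RandomRows

section Asymptotics

open Filter Topology

lemma tendsto_pow_mul_pow_sub (l K : ℕ) :
    Tendsto (fun n : ℕ => (n : ℝ) ^ l * 2 ^ l * (1 - (1 / 2) ^ l) ^ (n - K)) atTop (𝓝 0) := by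
  set r : ℝ := 1 - (1 / 2) ^ l with hr
  have hp : (0 : ℝ) < (1 / 2) ^ l := by positivity
  have hp1 : ((1 : ℝ) / 2) ^ l ≤ 1 := pow_le_one₀ (by norm_num) (by norm_num)
  rw [← tendsto_add_atTop_iff_nat K]
  have h := (tendsto_pow_const_mul_const_pow_of_abs_lt_one l
    (abs_lt.2 ⟨by linarith, by linarith⟩ : |r| < 1)).const_mul ((2 * (K + 1 : ℝ)) ^ l)
  rw [mul_zero] at h
  refine squeeze_zero' (Eventually.of_forall fun n => ?_) ?_ h
  · have : 0 ≤ r := by linarith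
    positivity
  · filter_upwards [eventually_ge_atTop 1] with n hn
    have hr0 : 0 ≤ r := by linarith
    have hn1 : (1 : ℝ) ≤ n := by exact_mod_cast hn
    rw [Nat.add_sub_cancel, ← mul_assoc, ← mul_pow, ← mul_pow]
    refine mul_le_mul_of_nonneg_right (pow_le_pow_left₀ (by positivity) ?_ l) (by positivity)
    push_cast
    nlinarith [(by positivity : (0 : ℝ) ≤ K)]

lemma tendsto_sqrt_div_sqrt_mul_log :
    Tendsto (fun n : ℕ => 3 * √(n : ℝ) / √(n * Real.log n)) atTop (𝓝 0) := by
  have h : Tendsto (fun n : ℕ => 3 / √(Real.log n)) atTop (𝓝 0) :=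
    tendsto_const_nhds.div_atTop
      (Real.tendsto_sqrt_atTop.comp (Real.tendsto_log_atTop.comp tendsto_natCast_atTop_atTop))
  refine h.congr' ?_
  filter_upwards [eventually_ge_atTop 1] with n hn
  have : 0 < √(n : ℝ) := Real.sqrt_pos.2 (by exact_mod_cast hn)
  rw [Real.sqrt_mul (by positivity)]
  field_simp

lemma eventually_mul_log_le_sqrt (c : ℝ) :
    ∀ᶠ n : ℕ in atTop, c * Real.log n ≤ √(n * Real.log n) := by
  have h1 : ∀ᶠ x : ℝ in atTop, c ^ 2 * Real.log x ≤ x := by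
    have h := (Real.isLittleO_log_id_atTop.def (by positivity : 0 < 1 / (c ^ 2 + 1)))
    filter_upwards [h, eventually_ge_atTop 1] with x hx hx1
    rw [id, Real.norm_of_nonneg (Real.log_nonneg hx1), Real.norm_of_nonneg (by linarith),
      div_mul_eq_mul_div, one_mul, le_div_iff₀ (by positivity)] at hx
    linarith [Real.log_nonneg hx1]
  filter_upwards [tendsto_natCast_atTop_atTop.eventually h1] with n hn
  refine Real.le_sqrt_of_sq_le ?_
  nlinarith [Real.log_natCast_nonneg n]

end Asymptotics

/-- With probability `1 - o(1)`, a uniformly random `n × n` `±1` matrix has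
`|det M_n| ≥ √(n!) · exp(-29 √(n ln n))`. -/
theorem abs_det_random_sign_matrix_large :
    ∀ δ > (0 : ℝ), ∃ N : ℕ, ∀ n ≥ N,
      1 - δ ≤
        (Nat.card {b : Fin n → Fin n → Bool //
            Real.sqrt (Nat.factorial n) * Real.exp (-29 * Real.sqrt (n * Real.log n)) ≤
              |(signMatrix n b).det|} : ℝ) / 2 ^ (n ^ 2) := by
  intro δ hδ
  obtain ⟨K, hK1, hK⟩ : ∃ K : ℕ, 1 ≤ K ∧ 1728 / (K : ℝ) ≤ δ / 4 :=
    ((Filter.eventually_ge_atTop 1).and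
      ((tendsto_const_div_atTop_nhds_zero_nat 1728).eventually_le_const
        (by positivity : 0 < δ / 4))).exists
  obtain ⟨m, hm1, hm⟩ : ∃ m : ℕ, 1 ≤ m ∧ K / √(2 * m + 1) ≤ δ / 4 := by
    have h : Filter.Tendsto (fun m : ℕ => K / √(2 * (m : ℝ) + 1)) Filter.atTop (nhds 0) :=
      tendsto_const_nhds.div_atTop (Real.tendsto_sqrt_atTop.comp
        (Filter.tendsto_atTop_add_const_right _ _
          (tendsto_natCast_atTop_atTop.const_mul_atTop two_pos)))
    exact ((Filter.eventually_ge_atTop 1).and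
      (h.eventually_le_const (by positivity : 0 < δ / 4))).exists
  rw [← Filter.eventually_atTop]
  filter_upwards [tendsto_sqrt_div_sqrt_mul_log.eventually_le_const (by positivity : 0 < δ / 4),
    (tendsto_pow_mul_pow_sub (2 * m) K).eventually_le_const (by positivity : 0 < δ / 4),
    eventually_mul_log_le_sqrt (2 * K), Filter.eventually_ge_atTop 2,
    Filter.eventually_ge_atTop K, Filter.eventually_ge_atTop (2 * m)]
    with n h1 h2 h3 hn hKn hmn
  have hn1 : (1 : ℝ) < n := by exact_mod_cast hn
  have ht : 0 < √(n * Real.log n) :=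
    Real.sqrt_pos.2 (mul_pos (by linarith) (Real.log_pos hn1))
  have hbad := pr_not_sqrt_factorial_mul_exp_le_abs_det_le (by omega) hK1 hKn hm1 hmn ht
  have hsum := pr_add_pr_not (fun b : Fin n → Fin n → Bool => √(n.factorial) *
    Real.exp (-(√(n * Real.log n) + 2 * K * Real.log n)) ≤ |(signMatrix n b).det|)
  have hmono : pr (fun b : Fin n → Fin n → Bool => √(n.factorial) *
      Real.exp (-(√(n * Real.log n) + 2 * K * Real.log n)) ≤ |(signMatrix n b).det|) ≤
      pr (fun b : Fin n → Fin n → Bool => √(n.factorial) *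
        Real.exp (-29 * √(n * Real.log n)) ≤ |(signMatrix n b).det|) := by
    refine pr_mono fun b hb => le_trans ?_ hb
    gcongr
    linarith
  have hcard : (Fintype.card (Fin n → Fin n → Bool) : ℝ) = 2 ^ (n ^ 2) := by
    simp [sq, pow_mul]
  rw [← hcard]
  change 1 - δ ≤ pr _
  linarith
end

section
/- For every δ > 0 there exists N such that for all n ≥ N, the probability that det M_n = 0 is at most δ. (That is, P(det M_n = 0) = o(1) as n → ∞.) -/
open Finset

/-- The `±1` vector with a given Boolean pattern. -/
def signVector {ι : Type*} (x : ι → Bool) : ι → ℝ := fun j => if x j then 1 else -1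

lemma signVector_eq_iff {ι κ : Type*} (x : ι → Bool) (y : κ → Bool) (i : ι) (j : κ) :
    signVector x i = signVector y j ↔ x i = y j := by
  unfold signVector
  cases x i <;> cases y j <;> norm_num

/-- If a property of a family fails for all but at most `K` values of the `k`-th member, whatever
the others are, then it has density at most `K / card β`. -/
lemma card_filter_mul_card_le_of_update {ι β : Type*} [Fintype ι] [DecidableEq ι] [Fintype β]
    (P : (ι → β) → Prop) [DecidablePred P] (k : ι) (K : ℕ)
    (h : ∀ b, #{x | P (Function.update b k x)} ≤ K) :
    #{b | P b} * Fintype.card β ≤ K * Fintype.card (ι → β) := by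
  classical
  calc #{b | P b} * Fintype.card β
      = #((univ.filter P) ×ˢ (univ : Finset β)) := by simp [card_product]
    _ ≤ #(univ.filter fun q : (ι → β) × β => P (Function.update q.1 k q.2)) := by
        refine card_le_card_of_injOn (fun q => (Function.update q.1 k q.2, q.1 k)) ?_ ?_
        · rintro ⟨b, x⟩ hq
          simpa using hq
        · rintro ⟨b, x⟩ - ⟨b', x'⟩ - heq
          simp only [Prod.mk.injEq] at heq
          obtain ⟨h1, h2⟩ := heq
          have hx : x = x' := by simpa using congrFun h1 k
          refine Prod.ext (funext fun i => ?_) hx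
          by_cases hi : i = k
          · subst hi; exact h2
          · simpa [hi] using congrFun h1 i
    _ ≤ K * #(univ : Finset (ι → β)) := by
        refine card_le_mul_card_image_of_maps_to (f := Prod.fst) (fun _ _ => mem_univ _) K ?_
        intro b _
        refine le_trans ?_ (h b)
        refine card_le_card_of_injOn Prod.snd ?_ ?_
        · rintro ⟨b', x⟩ hq
          simp only [coe_filter, mem_filter, mem_univ, true_and, Set.mem_ofPred_eq] at hq ⊢
          rw [← hq.2]; exact hq.1
        · rintro ⟨b', x⟩ hq ⟨b'', x'⟩ hq' heq
          simp only [coe_filter, mem_filter, mem_univ, true_and, Set.mem_ofPred_eq] at hq hq'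
          exact Prod.ext (hq.2.trans hq'.2.symm) heq
    _ = K * Fintype.card (ι → β) := by rw [card_univ]

/-- A subspace of dimension `d` contains at most `2 ^ d` sign vectors. -/
lemma card_signVector_mem_le {ι : Type*} [Fintype ι] [DecidableEq ι] (V : Submodule ℝ (ι → ℝ))
    [DecidablePred (· ∈ V)] :
    #{x : ι → Bool | signVector x ∈ V} ≤ 2 ^ Module.finrank ℝ V := by
  classical
  let φ : ι → Module.Dual ℝ V := fun j => (LinearMap.proj j).comp V.subtype
  obtain ⟨κ, a, ha, hsp, hli⟩ := exists_linearIndependent' ℝ φ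
  have : Fintype κ := Fintype.ofInjective a ha
  have hκ : Fintype.card κ ≤ Module.finrank ℝ V := by
    rw [← Subspace.dual_finrank_eq]
    exact hli.fintype_card_le_finrank
  calc #{x : ι → Bool | signVector x ∈ V} ≤ #(univ : Finset (κ → Bool)) := by
        refine card_le_card_of_injOn (fun x => x ∘ a) (fun _ _ => mem_coe.2 (mem_univ _)) ?_
        intro x hx y hy hxy
        simp only [coe_filter, mem_univ, true_and, Set.mem_ofPred_eq] at hx hy
        let w : V := ⟨signVector x, hx⟩ - ⟨signVector y, hy⟩
        have hker : Submodule.span ℝ (Set.range (φ ∘ a)) ≤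
            LinearMap.ker (Module.Dual.eval ℝ V w) := by
          rw [Submodule.span_le]
          rintro _ ⟨j, rfl⟩
          have := (signVector_eq_iff x y (a j) (a j)).2 (congrFun hxy j)
          simp [φ, w, this]
        funext j
        have hj : φ j ∈ LinearMap.ker (Module.Dual.eval ℝ V w) :=
          hker (hsp ▸ Submodule.subset_span ⟨j, rfl⟩)
        have : signVector x j - signVector y j = 0 := by simpa [φ, w] using hj
        exact (signVector_eq_iff x y j j).1 (sub_eq_zero.1 this)
    _ = 2 ^ Fintype.card κ := by simp
    _ ≤ _ := Nat.pow_le_pow_right (by norm_num) hκ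

/-- The Erdős–Littlewood–Offord bound when all coefficients are nonzero. -/
lemma card_sum_mul_signVector_eq_le_of_ne_zero {ι : Type*} [Fintype ι] [DecidableEq ι]
    (v : ι → ℝ) (hv : ∀ j, v j ≠ 0) (c : ℝ) :
    #{x : ι → Bool | ∑ j, v j * signVector x j = c} ≤
      (Fintype.card ι).choose (Fintype.card ι / 2) := by
  classical
  let F : (ι → Bool) → Finset ι := fun x => univ.filter fun j => x j = decide (0 < v j)
  have hF : Function.Injective F := by
    intro x y hxy
    funext j
    have : x j = decide (0 < v j) ↔ y j = decide (0 < v j) := by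
      simpa [F] using congrArg (j ∈ ·) hxy
    revert this
    cases x j <;> cases y j <;> cases decide (0 < v j) <;> simp
  rw [← card_image_of_injective _ hF]
  refine IsAntichain.sperner ?_
  intro s hs t ht hst hsub
  simp only [coe_image, Set.mem_image, coe_filter, mem_univ, true_and, Set.mem_ofPred_eq] at hs ht
  obtain ⟨x, hx, rfl⟩ := hs
  obtain ⟨y, hy, rfl⟩ := ht
  have hle : ∀ j, x j = decide (0 < v j) → y j = decide (0 < v j) := by
    intro j hj
    have : j ∈ F y := hsub (by simpa [F] using hj)
    simpa [F] using this
  have hterm : ∀ j, v j * signVector x j ≤ v j * signVector y j ∧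
      (v j * signVector x j = v j * signVector y j → x j = y j) := by
    intro j
    have h := hle j
    unfold signVector
    rcases lt_or_gt_of_ne (hv j) with hj | hj
    · have hd : decide (0 < v j) = false := by simpa using hj.le
      rw [hd] at h
      revert h
      cases x j <;> cases y j <;> simp
      all_goals first | linarith | (constructor <;> linarith)
    · have hd : decide (0 < v j) = true := by simpa using hj
      rw [hd] at h
      revert h
      cases x j <;> cases y j <;> simp
      all_goals first | linarith | (constructor <;> linarith)
  apply hst
  have : x = y := by
    funext j
    refine (hterm j).2 ?_
    exact (sum_eq_sum_iff_of_le fun i _ => (hterm i).1).1 (hx.trans hy.symm) j (mem_univ _)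
  rw [this]

/-- The Erdős–Littlewood–Offord bound for a linear form that is nonzero on a set `S` of
coordinates. -/
lemma card_sum_mul_signVector_eq_zero_le {ι : Type*} [Fintype ι] [DecidableEq ι]
    (v : ι → ℝ) (S : Finset ι) (hv : ∀ j ∈ S, v j ≠ 0) :
    #{x : ι → Bool | ∑ j, v j * signVector x j = 0} ≤
      (#S).choose (#S / 2) * 2 ^ (Fintype.card ι - #S) := by
  classical
  calc #{x : ι → Bool | ∑ j, v j * signVector x j = 0}
      ≤ (#S).choose (#S / 2) * #(univ : Finset ({j // j ∉ S} → Bool)) := by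
        refine card_le_mul_card_image_of_maps_to
          (f := fun (x : ι → Bool) (j : {j // j ∉ S}) => x j) (fun _ _ => mem_univ _) _ ?_
        intro y _
        have key := card_sum_mul_signVector_eq_le_of_ne_zero (fun j : {j // j ∈ S} => v j)
          (fun j => hv j j.2) (-∑ j : {j // j ∉ S}, v j * signVector y j)
        rw [Fintype.card_coe] at key
        refine le_trans ?_ key
        refine card_le_card_of_injOn (fun x j => x j) ?_ ?_
        · intro x hx
          simp only [coe_filter, mem_filter, mem_univ, true_and, Set.mem_ofPred_eq] at hx ⊢
          obtain ⟨h0, rfl⟩ := hx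
          rw [← Fintype.sum_subtype_add_sum_subtype (· ∈ S)] at h0
          refine eq_neg_of_add_eq_zero_left (Eq.trans ?_ h0)
          exact congrArg₂ _ (sum_congr (by ext; simp) fun _ _ => rfl) rfl
        · intro x hx x' hx' heq
          simp only [coe_filter, mem_filter, mem_univ, true_and, Set.mem_ofPred_eq] at hx hx'
          funext j
          by_cases hj : j ∈ S
          · exact congrFun heq ⟨j, hj⟩
          · exact congrFun (hx.2.trans hx'.2.symm) ⟨j, hj⟩
    _ = _ := by simp [Fintype.card_subtype_compl]

lemma centralBinom_sq_mul_le (t : ℕ) : t.centralBinom ^ 2 * (2 * t + 1) ≤ 16 ^ t := by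
  induction t with
  | zero => simp
  | succ t ih =>
    have h := Nat.succ_mul_centralBinom_succ t
    refine Nat.le_of_mul_le_mul_left ?_ (show 0 < (t + 1) ^ 2 by positivity)
    calc (t + 1) ^ 2 * ((t + 1).centralBinom ^ 2 * (2 * (t + 1) + 1))
        = ((t + 1) * (t + 1).centralBinom) ^ 2 * (2 * t + 3) := by ring
      _ = 4 * (2 * t + 1) * (2 * t + 3) * (t.centralBinom ^ 2 * (2 * t + 1)) := by rw [h]; ring
      _ ≤ 4 * (2 * t + 1) * (2 * t + 3) * 16 ^ t := by gcongr
      _ ≤ (16 * (t + 1) ^ 2) * 16 ^ t := Nat.mul_le_mul_right _ (by nlinarith)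
      _ = _ := by ring

lemma tendsto_centralBinom_div_four_pow :
    Filter.Tendsto (fun t : ℕ => (t.centralBinom : ℝ) / 4 ^ t) Filter.atTop (nhds 0) := by
  have hlim : Filter.Tendsto (fun t : ℕ => √(1 / ((t : ℝ) + 1))) Filter.atTop (nhds 0) := by
    simpa using (tendsto_one_div_add_atTop_nhds_zero_nat (𝕜 := ℝ)).sqrt
  refine squeeze_zero (fun t => by positivity) (fun t => Real.le_sqrt_of_sq_le ?_) hlim
  have h : (t.centralBinom : ℝ) ^ 2 * (2 * t + 1) ≤ 16 ^ t := mod_cast centralBinom_sq_mul_le t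
  rw [div_pow, ← pow_mul, mul_comm t 2, pow_mul, div_le_div_iff₀ (by positivity) (by positivity)]
  norm_num
  refine le_trans ?_ h
  gcongr
  have : (0 : ℝ) ≤ t := t.cast_nonneg
  linarith

/-- Every pattern on every `m`-set of columns occurs in one of the first `r` rows. -/
def RealizesPatterns {n : ℕ} (r m : ℕ) (b : Fin n → Fin n → Bool) : Prop :=
  ∀ S : Finset (Fin n), #S = m → ∀ T ∈ S.powerset, ∃ i : Fin n, (i : ℕ) < r ∧
    ∀ j ∈ S, b i j = decide (j ∈ T)

lemma card_eqOn {n : ℕ} (S : Finset (Fin n)) (d : Fin n → Bool) :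
    #{x : Fin n → Bool | ∀ j ∈ S, x j = d j} = 2 ^ (n - #S) := by
  have : (univ.filter fun x : Fin n → Bool => ∀ j ∈ S, x j = d j) =
      Fintype.piFinset fun j => if j ∈ S then {d j} else univ := by
    ext x
    simp only [mem_filter, mem_univ, true_and, Fintype.mem_piFinset]
    refine forall_congr' fun j => ?_
    split_ifs with h <;> simp [h]
  rw [this, Fintype.card_piFinset]
  simp only [apply_ite card, card_singleton, card_univ, Fintype.card_bool]
  rw [prod_ite]
  simp only [prod_const_one, one_mul, prod_const]
  rw [filter_not, filter_mem_eq_inter, univ_inter, ← compl_eq_univ_sdiff, card_compl,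
    Fintype.card_fin]

open Classical in
lemma card_not_realizesPatterns_le (n r m : ℕ) (hr : r ≤ n) (hm : m ≤ n) :
    (#{b : Fin n → Fin n → Bool | ¬ RealizesPatterns r m b} : ℝ) ≤
      (n ^ m * 2 ^ m * (1 - (1 / 2) ^ m) ^ r) * 2 ^ (n ^ 2) := by
  have hone : ∀ S : Finset (Fin n), #S = m → ∀ T : Finset (Fin n),
      #{b : Fin n → Fin n → Bool | ∀ i : Fin n, (i : ℕ) < r → ¬ ∀ j ∈ S, b i j = decide (j ∈ T)}
        = (2 ^ n - 2 ^ (n - m)) ^ r * (2 ^ n) ^ (n - r) := by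
    intro S hS T
    have : (univ.filter fun b : Fin n → Fin n → Bool =>
        ∀ i : Fin n, (i : ℕ) < r → ¬ ∀ j ∈ S, b i j = decide (j ∈ T)) =
        Fintype.piFinset fun i : Fin n => if (i : ℕ) < r then
          (univ.filter fun x : Fin n → Bool => ∀ j ∈ S, x j = decide (j ∈ T))ᶜ else univ := by
      ext b
      simp only [mem_filter, mem_univ, true_and, Fintype.mem_piFinset]
      refine forall_congr' fun i => ?_
      split_ifs with h <;> simp [h]
    rw [this, Fintype.card_piFinset]
    simp only [apply_ite card, card_compl, card_eqOn, hS, card_univ, Fintype.card_pi,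
      Fintype.card_bool, prod_const, Fintype.card_fin]
    have hcard : #(univ.filter fun i : Fin n => (i : ℕ) < r) = r := by
      rw [Fin.card_filter_val_lt]; exact min_eq_right hr
    rw [prod_ite, prod_const, prod_const, filter_not, card_sdiff_of_subset (subset_univ _), hcard,
      card_univ, Fintype.card_fin]
  have hnat : #{b : Fin n → Fin n → Bool | ¬ RealizesPatterns r m b} ≤
      n ^ m * (2 ^ m * ((2 ^ n - 2 ^ (n - m)) ^ r * (2 ^ n) ^ (n - r))) := by
    calc #{b : Fin n → Fin n → Bool | ¬ RealizesPatterns r m b}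
        ≤ #((powersetCard m (univ : Finset (Fin n))).biUnion fun S => S.powerset.biUnion fun T =>
            {b : Fin n → Fin n → Bool |
              ∀ i : Fin n, (i : ℕ) < r → ¬ ∀ j ∈ S, b i j = decide (j ∈ T)}) := by
          refine card_le_card fun b hb => ?_
          have hb' := (mem_filter.1 hb).2
          unfold RealizesPatterns at hb'
          push Not at hb'
          obtain ⟨S, hS, T, hT, h⟩ := hb'
          simp only [mem_biUnion, mem_filter, mem_univ, true_and]
          refine ⟨S, mem_powersetCard.2 ⟨subset_univ _, hS⟩, T, hT, fun i hi hall => ?_⟩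
          obtain ⟨j, hj, hne⟩ := h i hi
          exact hne (hall j hj)
      _ ≤ #(powersetCard m (univ : Finset (Fin n))) *
            (2 ^ m * ((2 ^ n - 2 ^ (n - m)) ^ r * (2 ^ n) ^ (n - r))) := by
          refine card_biUnion_le_card_mul _ _ _ fun S hS => ?_
          have hS' := (mem_powersetCard.1 hS).2
          have := card_biUnion_le_card_mul S.powerset
            (fun T => {b : Fin n → Fin n → Bool |
              ∀ i : Fin n, (i : ℕ) < r → ¬ ∀ j ∈ S, b i j = decide (j ∈ T)}) _
              fun T _ => (hone S hS' T).le
          rwa [card_powerset, hS'] at this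
      _ ≤ _ := by
          refine Nat.mul_le_mul_right _ ?_
          rw [card_powersetCard, card_univ, Fintype.card_fin]
          exact Nat.choose_le_pow n m
  have hsub : ((2 ^ n - 2 ^ (n - m) : ℕ) : ℝ) = (1 - (1 / 2) ^ m) * 2 ^ n := by
    rw [Nat.cast_sub (Nat.pow_le_pow_right (by norm_num) (Nat.sub_le _ _))]
    push_cast
    rw [pow_sub₀ _ two_ne_zero hm, one_div, inv_pow]
    ring
  refine (Nat.cast_le.2 hnat).trans (le_of_eq ?_)
  rw [Nat.cast_mul, Nat.cast_mul, Nat.cast_mul, Nat.cast_pow _ r, hsub, mul_pow]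
  have h2 : ((2 : ℝ) ^ n) ^ r * (2 ^ n) ^ (n - r) = 2 ^ (n ^ 2) := by
    rw [← pow_add, Nat.add_sub_cancel' hr, ← pow_mul, sq]
  rw [← h2]
  push_cast
  ring

/-- The span of the rows preceding the `k`-th one. -/
noncomputable def spanRowsBefore {n : ℕ} (b : Fin n → Fin n → Bool) (k : Fin n) :
    Submodule ℝ (Fin n → ℝ) :=
  Submodule.span ℝ ((Iio k).image fun i => signVector (b i) : Finset (Fin n → ℝ))

lemma signVector_mem_spanRowsBefore {n : ℕ} (b : Fin n → Fin n → Bool) {i k : Fin n}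
    (h : i < k) : signVector (b i) ∈ spanRowsBefore b k :=
  Submodule.subset_span (mem_coe.2 (mem_image_of_mem _ (mem_Iio.2 h)))

lemma spanRowsBefore_update {n : ℕ} (b : Fin n → Fin n → Bool) (k : Fin n) (x : Fin n → Bool) :
    spanRowsBefore (Function.update b k x) k = spanRowsBefore b k := by
  unfold spanRowsBefore
  congr 2
  refine image_congr fun i hi => ?_
  rw [Function.update_of_ne (ne_of_lt (by simpa using hi))]

lemma finrank_spanRowsBefore_le {n : ℕ} (b : Fin n → Fin n → Bool) (k : Fin n) :
    Module.finrank ℝ (spanRowsBefore b k) ≤ k :=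
  (finrank_span_finset_le_card _).trans (card_image_le.trans (Fin.card_Iio k).le)

lemma RealizesPatterns.of_update {n r m : ℕ} {b : Fin n → Fin n → Bool} {k : Fin n}
    {x : Fin n → Bool} (hk : r ≤ k) (h : RealizesPatterns r m (Function.update b k x)) :
    RealizesPatterns r m b := by
  intro S hS T hT
  obtain ⟨i, hi, hij⟩ := h S hS T hT
  refine ⟨i, hi, ?_⟩
  rwa [Function.update_of_ne (fun h => by subst h; omega)] at hij

lemma exists_mem_spanRowsBefore_of_det_eq_zero {n : ℕ} (b : Fin n → Fin n → Bool)
    (h : (signMatrix n b).det = 0) : ∃ k, signVector (b k) ∈ spanRowsBefore b k := by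
  classical
  obtain ⟨g, hg, hgb⟩ := Matrix.exists_vecMul_eq_zero_iff.2 h
  have hne : (univ.filter fun i => g i ≠ 0).Nonempty := by
    obtain ⟨i, hi⟩ := Function.ne_iff.1 hg
    exact ⟨i, by simpa using hi⟩
  obtain ⟨k, hk, hmax⟩ := exists_max_image _ id hne
  have hk' : g k ≠ 0 := by simpa using hk
  refine ⟨k, ?_⟩
  have hsum : ∑ i, g i • signVector (b i) = 0 := by
    rw [← hgb]
    ext j
    simp [Matrix.vecMul, dotProduct, signMatrix, signVector]
  rw [← add_sum_erase _ _ (mem_univ k)] at hsum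
  rw [← Submodule.smul_mem_iff _ hk', eq_neg_of_add_eq_zero_left hsum]
  refine Submodule.neg_mem _ (Submodule.sum_mem _ fun i hi => ?_)
  by_cases h0 : g i = 0
  · simp [h0]
  · exact Submodule.smul_mem _ _ (signVector_mem_spanRowsBefore b
      (lt_of_le_of_ne (hmax i (by simpa using h0)) (ne_of_mem_erase hi)))

/-- If all patterns on `m` columns occur before row `k`, then some linear form vanishing on the
rows before `k` is nonzero on at least `m` coordinates. -/
lemma RealizesPatterns.exists_linear_form {n r m : ℕ} {b : Fin n → Fin n → Bool}
    (h : RealizesPatterns r m b) (hm : m ≤ n) {k : Fin n} (hk : r ≤ k) :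
    ∃ (v : Fin n → ℝ) (S : Finset (Fin n)), #S = m ∧ (∀ j ∈ S, v j ≠ 0) ∧
      ∀ w ∈ spanRowsBefore b k, ∑ j, v j * w j = 0 := by
  classical
  have hlt : spanRowsBefore b k < ⊤ := by
    refine lt_top_iff_ne_top.2 fun htop => ?_
    have := finrank_spanRowsBefore_le b k
    rw [htop, finrank_top, Module.finrank_fin_fun] at this
    omega
  obtain ⟨f, hf, hker⟩ := Submodule.exists_le_ker_of_lt_top _ hlt
  let v : Fin n → ℝ := fun j => f (Pi.single j 1)
  have hfv : ∀ w, f w = ∑ j, v j * w j := by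
    intro w
    rw [LinearMap.pi_apply_eq_sum_univ f w]
    refine sum_congr rfl fun j _ => ?_
    rw [smul_eq_mul, mul_comm]
    congr 2
    ext i
    simp [Pi.single_apply, eq_comm]
  have hv : ∀ w ∈ spanRowsBefore b k, ∑ j, v j * w j = 0 := fun w hw => by
    rw [← hfv]; exact hker hw
  rcases le_or_gt m #(univ.filter fun j => v j ≠ 0) with hc | hc
  · obtain ⟨S, hS, hcard⟩ := exists_subset_card_eq hc
    exact ⟨v, S, hcard, fun j hj => by simpa using hS hj, hv⟩
  · exfalso
    obtain ⟨S, hS, hcard⟩ := exists_superset_card_eq hc.le (by simpa using hm)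
    obtain ⟨i, hi, hij⟩ := h S hcard (S.filter fun j => 0 < v j) (by simp)
    have h0 := hv _ (signVector_mem_spanRowsBefore b (i := i) (k := k) (by
      rw [Fin.lt_def]; omega))
    have habs : ∀ j, v j * signVector (b i) j = |v j| := by
      intro j
      by_cases hj : v j = 0
      · simp [hj]
      have hjS : j ∈ S := hS (by simpa using hj)
      rw [signVector, hij j hjS]
      rcases lt_or_gt_of_ne hj with hneg | hpos
      · simp [not_lt.2 hneg.le, abs_of_neg hneg]
      · simp [hjS, hpos, abs_of_pos hpos]
    rw [sum_congr rfl fun j _ => habs j, sum_eq_zero_iff_of_nonneg fun j _ => abs_nonneg _] at h0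
    refine hf (LinearMap.ext fun w => ?_)
    rw [hfv]
    exact sum_eq_zero fun j hj => by rw [abs_eq_zero.1 (h0 j hj), zero_mul]

open Classical in
lemma card_mem_spanRowsBefore_le {n : ℕ} (k : Fin n) :
    (#{b : Fin n → Fin n → Bool | signVector (b k) ∈ spanRowsBefore b k} : ℝ) ≤
      2 ^ (k : ℕ) / 2 ^ n * 2 ^ (n ^ 2) := by
  have h := card_filter_mul_card_le_of_update
    (fun b : Fin n → Fin n → Bool => signVector (b k) ∈ spanRowsBefore b k) k (2 ^ (k : ℕ)) ?_
  · rw [div_mul_eq_mul_div, le_div_iff₀ (by positivity)]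
    have h' : (_ : ℝ) ≤ _ := Nat.cast_le.2 h
    simpa [← pow_mul, sq] using h'
  · intro b
    simp only [spanRowsBefore_update, Function.update_self]
    exact (card_signVector_mem_le _).trans
      (Nat.pow_le_pow_right (by norm_num) (finrank_spanRowsBefore_le b k))

open Classical in
lemma card_mem_spanRowsBefore_and_realizesPatterns_le {n r t : ℕ} (ht : 2 * t ≤ n) {k : Fin n}
    (hk : r ≤ k) :
    (#{b : Fin n → Fin n → Bool |
        signVector (b k) ∈ spanRowsBefore b k ∧ RealizesPatterns r (2 * t) b} : ℝ) ≤
      t.centralBinom / 4 ^ t * 2 ^ (n ^ 2) := by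
  have h := card_filter_mul_card_le_of_update
    (fun b : Fin n → Fin n → Bool =>
      signVector (b k) ∈ spanRowsBefore b k ∧ RealizesPatterns r (2 * t) b) k
    (t.centralBinom * 2 ^ (n - 2 * t)) ?_
  · have h' : (_ : ℝ) ≤ _ := Nat.cast_le.2 h
    rw [div_mul_eq_mul_div, le_div_iff₀ (by positivity)]
    refine le_of_mul_le_mul_right ?_ (show (0 : ℝ) < 2 ^ (n - 2 * t) by positivity)
    have hpow : (4 : ℝ) ^ t * 2 ^ (n - 2 * t) = 2 ^ n := by
      rw [show (4 : ℝ) = 2 ^ 2 by norm_num, ← pow_mul, ← pow_add, Nat.add_sub_cancel' ht]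
    rw [mul_assoc, hpow]
    simp [← pow_mul, ← sq] at h'
    linarith
  · intro b
    by_cases hb : RealizesPatterns r (2 * t) b
    · obtain ⟨v, S, hS, hvS, hv⟩ := hb.exists_linear_form ht hk
      have key := card_sum_mul_signVector_eq_zero_le v S hvS
      rw [hS, Fintype.card_fin, Nat.mul_div_cancel_left _ two_pos,
        ← Nat.centralBinom_eq_two_mul_choose] at key
      refine (card_le_card fun x hx => ?_).trans key
      simp only [mem_filter, mem_univ, true_and, spanRowsBefore_update,
        Function.update_self] at hx ⊢
      exact hv _ hx.1
    · rw [filter_eq_empty_iff.2 fun x _ hx => hb (hx.2.of_update hk)]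
      simp

/-- An explicit bound for the singularity probability. -/
lemma card_det_eq_zero_le {n t C : ℕ} (ht : 2 * t ≤ n) (hC : C ≤ n) :
    (Nat.card {b : Fin n → Fin n → Bool // (signMatrix n b).det = 0} : ℝ) / 2 ^ (n ^ 2) ≤
      n ^ (2 * t) * 2 ^ (2 * t) * (1 - (1 / 2) ^ (2 * t)) ^ (n - C) +
        ((1 / 2) ^ C + C * (t.centralBinom / 4 ^ t)) := by
  classical
  obtain ⟨r, rfl⟩ := Nat.exists_eq_add_of_le' hC
  rw [Nat.add_sub_cancel]
  set n := r + C with hn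
  rw [div_le_iff₀ (by positivity), add_mul]
  let E : Fin n → Finset (Fin n → Fin n → Bool) := fun k =>
    if (k : ℕ) < r then univ.filter fun b => signVector (b k) ∈ spanRowsBefore b k
    else univ.filter fun b => signVector (b k) ∈ spanRowsBefore b k ∧ RealizesPatterns r (2 * t) b
  have hcover : (univ.filter fun b => (signMatrix n b).det = 0) ⊆
      (univ.filter fun b : Fin n → Fin n → Bool => ¬ RealizesPatterns r (2 * t) b) ∪
        univ.biUnion E := by
    intro b hb
    obtain ⟨k, hk⟩ := exists_mem_spanRowsBefore_of_det_eq_zero b (by simpa using hb)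
    by_cases hR : RealizesPatterns r (2 * t) b
    · refine mem_union_right _ (mem_biUnion.2 ⟨k, mem_univ _, ?_⟩)
      simp only [E]
      split_ifs <;> simp [hk, hR]
    · exact mem_union_left _ (by simpa using hR)
  have hE : ∀ k : Fin n, (#(E k) : ℝ) ≤
      (if (k : ℕ) < r then 2 ^ (k : ℕ) / 2 ^ n else (t.centralBinom : ℝ) / 4 ^ t) *
        2 ^ (n ^ 2) := by
    intro k
    simp only [E]
    split_ifs with hk
    · exact card_mem_spanRowsBefore_le k
    · exact card_mem_spanRowsBefore_and_realizesPatterns_le ht (not_lt.1 hk)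
  have hsum : ∑ k : Fin n,
      (if (k : ℕ) < r then 2 ^ (k : ℕ) / 2 ^ n else (t.centralBinom : ℝ) / 4 ^ t) ≤
        (1 / 2) ^ C + C * (t.centralBinom / 4 ^ t) := by
    rw [Fin.sum_univ_eq_sum_range
      (fun k => if k < r then (2 : ℝ) ^ k / 2 ^ n else (t.centralBinom : ℝ) / 4 ^ t) n, hn,
      sum_range_add]
    refine add_le_add ?_ (by simp)
    rw [sum_congr rfl fun k hk => if_pos (mem_range.1 hk), ← sum_div, geom_sum_eq (by norm_num),
      div_le_iff₀ (by positivity), pow_add, one_div, inv_pow]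
    field_simp
    norm_num
  have hcard : (Nat.card {b : Fin n → Fin n → Bool // (signMatrix n b).det = 0} : ℝ) ≤
      #{b : Fin n → Fin n → Bool | ¬ RealizesPatterns r (2 * t) b} + ∑ k, (#(E k) : ℝ) := by
    rw [Nat.card_eq_fintype_card, Fintype.card_subtype]
    exact_mod_cast (card_le_card hcover).trans
      ((card_union_le _ _).trans (Nat.add_le_add_left card_biUnion_le _))
  refine hcard.trans (add_le_add (card_not_realizesPatterns_le n r (2 * t) (by omega) ht) ?_)
  refine (sum_le_sum fun k _ => hE k).trans ?_
  rw [← sum_mul]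
  gcongr

/-- The probability that a uniformly random `n × n` `±1` matrix is singular is `o(1)`. -/
theorem prob_random_sign_matrix_singular_small :
    ∀ δ > (0 : ℝ), ∃ N : ℕ, ∀ n ≥ N,
      (Nat.card {b : Fin n → Fin n → Bool // (signMatrix n b).det = 0} : ℝ) / 2 ^ (n ^ 2) ≤ δ := by
  intro δ hδ
  obtain ⟨C, hC⟩ := exists_pow_lt_of_lt_one (show 0 < δ / 3 by positivity)
    (show (1 / 2 : ℝ) < 1 by norm_num)
  obtain ⟨t, ht⟩ := ((tendsto_centralBinom_div_four_pow.const_mul (C : ℝ)).eventually_lt_const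
    (show (C : ℝ) * 0 < δ / 3 by simpa using by positivity)).exists
  have hρ : |1 - (1 / 2 : ℝ) ^ (2 * t)| < 1 := by
    have h0 : (0 : ℝ) < (1 / 2) ^ (2 * t) := by positivity
    have h1 : (1 / 2 : ℝ) ^ (2 * t) ≤ 1 := pow_le_one₀ (by norm_num) (by norm_num)
    rw [abs_lt]; constructor <;> linarith
  obtain ⟨J, hJ⟩ := Filter.eventually_atTop.1
    (((tendsto_pow_const_mul_const_pow_of_abs_lt_one (2 * t) hρ).const_mul
      ((2 : ℝ) ^ (2 * t) * 2 ^ (2 * t))).eventually_lt_const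
    (show (2 : ℝ) ^ (2 * t) * 2 ^ (2 * t) * 0 < δ / 3 by simpa using by positivity))
  refine ⟨J + 2 * C + 2 * t, fun n hn => ?_⟩
  refine (card_det_eq_zero_le (t := t) (C := C) (by omega) (by omega)).trans ?_
  have hj := hJ (n - C) (by omega)
  have hρ0 : (0 : ℝ) ≤ 1 - (1 / 2) ^ (2 * t) :=
    sub_nonneg.2 (pow_le_one₀ (by norm_num) (by norm_num))
  have hle : (n : ℝ) ≤ 2 * ((n - C : ℕ) : ℝ) := by
    exact_mod_cast (by omega : n ≤ 2 * (n - C))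
  have hfirst : (n : ℝ) ^ (2 * t) * 2 ^ (2 * t) * (1 - (1 / 2) ^ (2 * t)) ^ (n - C) ≤
      2 ^ (2 * t) * 2 ^ (2 * t) *
        (((n - C : ℕ) : ℝ) ^ (2 * t) * (1 - (1 / 2) ^ (2 * t)) ^ (n - C)) := by
    calc (n : ℝ) ^ (2 * t) * 2 ^ (2 * t) * (1 - (1 / 2) ^ (2 * t)) ^ (n - C)
        ≤ (2 * ((n - C : ℕ) : ℝ)) ^ (2 * t) * 2 ^ (2 * t) *
          (1 - (1 / 2) ^ (2 * t)) ^ (n - C) := by gcongr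
      _ = _ := by rw [mul_pow]; ring
  linarith
end

section
/- Let ε ∈ (0, 1/2) be the unique solution in that interval of the equation h(ε) + ε / log₂(16/15) = 1, where h(ε) := ε log₂(1/ε) + (1−ε) log₂(1/(1−ε)) is the binary entropy function (numerically ε = 0.06191...). Then for every δ > 0 there exists N such that for all n ≥ N, the probability that det M_n = 0 is at most (1 − ε + δ)^n. -/
/-- The binary entropy function. -/
noncomputable def binEntropy (x : ℝ) : ℝ :=
  x * Real.logb 2 (1 / x) + (1 - x) * Real.logb 2 (1 / (1 - x))

section

open Finset

/-- The sign `±1` encoded by a Boolean. -/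
def signOf (R : Type*) [Ring R] (b : Bool) : R := if b then 1 else -1

open scoped Classical in
/-- The probability that a uniformly random signed sum of the entries of `u` vanishes. -/
noncomputable def signProb {ι R : Type*} [Fintype ι] [Ring R] (u : ι → R) : ℝ :=
  (#{b : ι → Bool | ∑ i, signOf R (b i) * u i = 0} : ℝ) / 2 ^ Fintype.card ι

/-- The real part of the standard additive character of `ZMod q`. -/
noncomputable def charCos {q : ℕ} [NeZero q] (x : ZMod q) : ℝ := (ZMod.stdAddChar x).re

section charCos

variable {q : ℕ} [NeZero q]

lemma two_mul_charCos (x : ZMod q) :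
    (2 * charCos x : ℂ) = ZMod.stdAddChar x + ZMod.stdAddChar (-x) := by
  rw [AddChar.map_neg_eq_conj, Complex.add_conj, charCos]
  push_cast
  rfl

lemma abs_charCos_le_one (x : ZMod q) : |charCos x| ≤ 1 :=
  (Complex.abs_re_le_norm _).trans (AddChar.norm_apply _ x).le

lemma charCos_zero : charCos (0 : ZMod q) = 1 := by simp [charCos]

lemma charCos_two_mul (x : ZMod q) : charCos (2 * x) = 2 * charCos x ^ 2 - 1 := by
  have h : (2 * charCos (2 * x) : ℂ) = ((2 * (2 * charCos x ^ 2 - 1) : ℝ) : ℂ) := by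
    push_cast
    rw [two_mul_charCos]
    have h2 := two_mul_charCos x
    have h3 : ZMod.stdAddChar x * ZMod.stdAddChar (-x) = 1 := by
      rw [← AddChar.map_add_eq_mul]; simp
    have h4 : ZMod.stdAddChar (2 * x) = ZMod.stdAddChar x ^ 2 := by
      rw [two_mul, AddChar.map_add_eq_mul, sq]
    have h5 : ZMod.stdAddChar (-(2 * x)) = ZMod.stdAddChar (-x) ^ 2 := by
      rw [two_mul, neg_add, AddChar.map_add_eq_mul, sq]
    rw [h4, h5]
    linear_combination (-(2 * charCos x : ℂ) - (ZMod.stdAddChar x + ZMod.stdAddChar (-x))) * h2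
      - 2 * h3
  have : 2 * charCos (2 * x) = 2 * (2 * charCos x ^ 2 - 1) := by exact_mod_cast h
  linarith

lemma abs_charCos_le (x : ZMod q) : |charCos x| ≤ 3 / 4 + charCos (2 * x) / 4 := by
  rw [charCos_two_mul, ← sq_abs]
  nlinarith [sq_nonneg (|charCos x| - 1)]

lemma sum_stdAddChar_mul (y : ZMod q) :
    ∑ x : ZMod q, ZMod.stdAddChar (x * y) = if y = 0 then (q : ℂ) else 0 := by
  rw [AddChar.sum_mulShift y (ZMod.isPrimitive_stdAddChar q)]
  simp [ZMod.card]

lemma stdAddChar_sum {ι : Type*} (s : Finset ι) (f : ι → ZMod q) :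
    ZMod.stdAddChar (∑ i ∈ s, f i) = ∏ i ∈ s, ZMod.stdAddChar (f i) := by
  classical
  induction s using Finset.induction_on with
  | empty => simp
  | insert a s ha ih => rw [sum_insert ha, prod_insert ha, AddChar.map_add_eq_mul, ih]

lemma signProb_eq_sum_prod_charCos {ι : Type*} [Fintype ι] (u : ι → ZMod q) :
    signProb u = (∑ ξ : ZMod q, ∏ i, charCos (u i * ξ)) / q := by
  classical
  have hq : (q : ℂ) ≠ 0 := by exact_mod_cast NeZero.ne q
  have key : ∀ ξ : ZMod q, (∏ i, (charCos (u i * ξ) : ℂ)) =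
      (∑ b : ι → Bool, ZMod.stdAddChar (ξ * ∑ i, signOf (ZMod q) (b i) * u i))
        / 2 ^ Fintype.card ι := by
    intro ξ
    have h1 : (∏ i, (2 * charCos (u i * ξ) : ℂ)) =
        ∏ i, ∑ s : Bool, ZMod.stdAddChar (ξ * (signOf (ZMod q) s * u i)) := by
      refine prod_congr rfl fun i _ => ?_
      rw [two_mul_charCos, Fintype.sum_bool]
      simp [signOf, mul_comm]
    rw [prod_univ_sum, Fintype.piFinset_univ, prod_mul_distrib] at h1
    have h2 : (∏ _i : ι, (2 : ℂ)) = 2 ^ Fintype.card ι := by simp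
    rw [h2] at h1
    rw [eq_div_iff (pow_ne_zero _ two_ne_zero), mul_comm, h1]
    refine sum_congr rfl fun b _ => ?_
    rw [mul_sum, stdAddChar_sum]
  have hc : ((signProb u : ℝ) : ℂ) = ((∑ ξ : ZMod q, ∏ i, charCos (u i * ξ)) / q : ℝ) := by
    push_cast
    simp_rw [key]
    rw [← sum_div, sum_comm]
    simp_rw [sum_stdAddChar_mul]
    rw [signProb, ← sum_filter, sum_const]
    push_cast
    rw [nsmul_eq_mul, div_right_comm, mul_div_cancel_right₀ _ hq]
    congr!
  exact_mod_cast hc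

lemma signProb_le_sum_prod_abs {ι : Type*} [Fintype ι] (u : ι → ZMod q) :
    signProb u ≤ (1 + ∑ ξ : ZMod q with ξ ≠ 0, ∏ i, |charCos (u i * ξ)|) / q := by
  rw [signProb_eq_sum_prod_charCos]
  gcongr
  rw [← sum_filter_add_sum_filter_not univ (fun ξ : ZMod q => ξ = 0)]
  refine add_le_add ?_ (sum_le_sum fun ξ _ => ?_)
  · rw [filter_eq' univ (0 : ZMod q)]
    simp [charCos_zero]
  · rw [← abs_prod]
    exact le_abs_self _

/-- Parseval bound for a nonnegative weight, restricted to even dilates. -/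
lemma sum_sq_sum_mul_charCos_le (hq : Odd q) (W : ZMod q → ℝ) :
    ∑ a : ZMod q, (∑ ξ, W ξ * charCos (2 * (a * ξ))) ^ 2 ≤ q * ∑ ξ, W ξ ^ 2 := by
  have h2 : IsUnit (2 : ZMod q) := by
    have := (ZMod.isUnit_iff_coprime 2 q).2 (Nat.coprime_two_left.2 hq)
    exact_mod_cast this
  have hle : ∀ a : ZMod q, (∑ ξ, W ξ * charCos (2 * (a * ξ))) ^ 2 ≤
      ‖∑ ξ, (W ξ : ℂ) * ZMod.stdAddChar (2 * (a * ξ))‖ ^ 2 := by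
    intro a
    have : ∑ ξ, W ξ * charCos (2 * (a * ξ)) =
        (∑ ξ, (W ξ : ℂ) * ZMod.stdAddChar (2 * (a * ξ))).re := by
      rw [Complex.re_sum]
      simp [charCos]
    rw [this, ← sq_abs]
    gcongr
    exact Complex.abs_re_le_norm _
  refine (sum_le_sum fun a _ => hle a).trans (le_of_eq ?_)
  have hc : ((∑ a : ZMod q, ‖∑ ξ, (W ξ : ℂ) * ZMod.stdAddChar (2 * (a * ξ))‖ ^ 2 : ℝ) : ℂ) =
      ((q * ∑ ξ, W ξ ^ 2 : ℝ) : ℂ) := by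
    push_cast
    have h : ∀ a : ZMod q, ((‖∑ ξ, (W ξ : ℂ) * ZMod.stdAddChar (2 * (a * ξ))‖ : ℂ)) ^ 2 =
        ∑ ξ, ∑ ζ, (W ξ : ℂ) * W ζ * ZMod.stdAddChar (a * (2 * (ξ - ζ))) := by
      intro a
      rw [← Complex.mul_conj', map_sum, sum_mul_sum]
      refine sum_congr rfl fun ξ _ => sum_congr rfl fun ζ _ => ?_
      rw [map_mul (starRingEnd ℂ), Complex.conj_ofReal, ← AddChar.map_neg_eq_conj,
        show a * (2 * (ξ - ζ)) = 2 * (a * ξ) + -(2 * (a * ζ)) by ring, AddChar.map_add_eq_mul]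
      ring
    simp_rw [h]
    rw [sum_comm, mul_sum]
    refine sum_congr rfl fun ξ _ => ?_
    rw [sum_comm]
    simp_rw [← mul_sum, sum_stdAddChar_mul, h2.mul_right_eq_zero, sub_eq_zero]
    simp only [mul_ite, mul_zero, sum_ite_eq, mem_univ, if_true]
    ring
  exact_mod_cast hc

end charCos

section smoothing

variable {q : ℕ} [NeZero q]

/-- One random coordinate shrinks the `k`-th moment of the total weight. -/
lemma sum_pow_sum_mul_abs_charCos_le (hq : Odd q) (k : ℕ) {δ : ℝ} (W : ZMod q → ℝ)
    (hW0 : ∀ ξ, 0 ≤ W ξ) (hWδ : ∀ ξ, W ξ ≤ δ) (hS : 1 ≤ ∑ ξ, W ξ) :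
    ∑ a : ZMod q, (∑ ξ, W ξ * |charCos (a * ξ)|) ^ k ≤
      ((25 / 32) ^ k + 64 * δ) * q * (∑ ξ, W ξ) ^ k := by
  set S := ∑ ξ, W ξ with hSdef
  set R : ZMod q → ℝ := fun a => ∑ ξ, W ξ * charCos (2 * (a * ξ)) with hR
  have hδ : 0 ≤ δ := (hW0 0).trans (hWδ 0)
  have hR2 : ∑ a, R a ^ 2 ≤ q * (δ * S) := by
    refine (sum_sq_sum_mul_charCos_le hq W).trans ?_
    gcongr
    rw [hSdef, mul_sum]
    refine sum_le_sum fun ξ _ => ?_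
    rw [sq]
    exact mul_le_mul_of_nonneg_right (hWδ ξ) (hW0 ξ)
  have hnn : ∀ a : ZMod q, 0 ≤ ∑ ξ, W ξ * |charCos (a * ξ)| := fun a =>
    sum_nonneg fun ξ _ => mul_nonneg (hW0 ξ) (abs_nonneg _)
  have hstep : ∀ a : ZMod q, ∑ ξ, W ξ * |charCos (a * ξ)| ≤ 3 / 4 * S + R a / 4 := by
    intro a
    rw [hSdef, hR, mul_sum, sum_div, ← sum_add_distrib]
    refine sum_le_sum fun ξ _ => ?_
    calc W ξ * |charCos (a * ξ)| ≤ W ξ * (3 / 4 + charCos (2 * (a * ξ)) / 4) :=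
          mul_le_mul_of_nonneg_left (abs_charCos_le _) (hW0 ξ)
      _ = _ := by ring
  have htriv : ∀ a : ZMod q, ∑ ξ, W ξ * |charCos (a * ξ)| ≤ S := fun a =>
    sum_le_sum fun ξ _ => mul_le_of_le_one_right (hW0 ξ) (abs_charCos_le_one _)
  have hpt : ∀ a : ZMod q, (∑ ξ, W ξ * |charCos (a * ξ)|) ^ k ≤
      ((25 / 32) ^ k + 64 * (R a ^ 2 / S ^ 2)) * S ^ k := by
    intro a
    have hSpos : 0 < S := by linarith
    rcases le_or_gt (R a) (S / 8) with h | h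
    · have : ∑ ξ, W ξ * |charCos (a * ξ)| ≤ 25 / 32 * S := by linarith [hstep a]
      calc _ ≤ (25 / 32 * S) ^ k := pow_le_pow_left₀ (hnn a) this k
        _ = (25 / 32) ^ k * S ^ k := mul_pow _ _ _
        _ ≤ _ := by gcongr; exact le_add_of_nonneg_right (by positivity)
    · calc _ ≤ S ^ k := pow_le_pow_left₀ (hnn a) (htriv a) k
        _ = 1 * S ^ k := (one_mul _).symm
        _ ≤ _ := by
          gcongr
          have h1 : 1 ≤ 64 * (R a ^ 2 / S ^ 2) := by
            rw [← mul_div_assoc, le_div_iff₀ (by positivity)]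
            nlinarith
          have : (0 : ℝ) ≤ (25 / 32) ^ k := by positivity
          linarith
  calc ∑ a : ZMod q, (∑ ξ, W ξ * |charCos (a * ξ)|) ^ k
      ≤ ∑ a : ZMod q, ((25 / 32) ^ k + 64 * (R a ^ 2 / S ^ 2)) * S ^ k :=
        sum_le_sum fun a _ => hpt a
    _ = (q * (25 / 32) ^ k + 64 * ((∑ a, R a ^ 2) / S ^ 2)) * S ^ k := by
        rw [← sum_mul, sum_add_distrib, ← mul_sum, ← sum_div]
        simp [ZMod.card]
    _ ≤ _ := by
        gcongr
        have : (∑ a, R a ^ 2) / S ^ 2 ≤ q * δ := by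
          rw [div_le_iff₀ (by positivity)]
          refine hR2.trans ?_
          have : S ≤ S ^ 2 := by nlinarith
          calc (q : ℝ) * (δ * S) = q * δ * S := by ring
            _ ≤ q * δ * S ^ 2 := by gcongr
        linarith

open scoped Classical in
lemma card_fin_one_lt_sum_le (hq : Odd q) (k : ℕ) {δ : ℝ} (N : ℕ) :
    ∀ W : ZMod q → ℝ, (∀ ξ, 0 ≤ W ξ) → (∀ ξ, W ξ ≤ δ) →
      (#{a : Fin N → ZMod q | 1 < ∑ ξ, W ξ * ∏ i, |charCos (a i * ξ)|} : ℝ) ≤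
        (((25 / 32) ^ k + 64 * δ) * q) ^ N * (∑ ξ, W ξ) ^ k := by
  induction N with
  | zero =>
    intro W hW0 _
    by_cases h : 1 < ∑ ξ, W ξ
    · simpa [h] using one_le_pow₀ h.le
    · simpa [h] using pow_nonneg (sum_nonneg fun ξ _ => hW0 ξ) k
  | succ N ih =>
    intro W hW0 hWδ
    have hδ : 0 ≤ δ := (hW0 0).trans (hWδ 0)
    by_cases hS : 1 < ∑ ξ, W ξ
    · have hsplit : (#{a : Fin (N + 1) → ZMod q |
            1 < ∑ ξ, W ξ * ∏ i, |charCos (a i * ξ)|} : ℝ) =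
          ∑ x : ZMod q, (#{a : Fin N → ZMod q |
            1 < ∑ ξ, (W ξ * |charCos (x * ξ)|) * ∏ i, |charCos (a i * ξ)|} : ℝ) := by
        simp_rw [natCast_card_filter]
        rw [← (Fin.consEquiv fun _ => ZMod q).sum_comp, Fintype.sum_prod_type]
        simp [Fin.consEquiv, Fin.prod_univ_succ, mul_assoc]
      rw [hsplit]
      calc _ ≤ ∑ x : ZMod q, (((25 / 32) ^ k + 64 * δ) * q) ^ N *
              (∑ ξ, W ξ * |charCos (x * ξ)|) ^ k := by
            refine sum_le_sum fun x _ => ih _ (fun ξ => mul_nonneg (hW0 ξ) (abs_nonneg _))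
              fun ξ => ?_
            exact (mul_le_of_le_one_right (hW0 ξ) (abs_charCos_le_one _)).trans (hWδ ξ)
        _ ≤ (((25 / 32) ^ k + 64 * δ) * q) ^ N *
              (((25 / 32) ^ k + 64 * δ) * q * (∑ ξ, W ξ) ^ k) := by
            rw [← mul_sum]
            gcongr
            exact sum_pow_sum_mul_abs_charCos_le hq k W hW0 hWδ hS.le
        _ = _ := by ring
    · have hempty : ∀ a : Fin (N + 1) → ZMod q,
          ¬ 1 < ∑ ξ, W ξ * ∏ i, |charCos (a i * ξ)| := by
        intro a
        rw [not_lt] at hS ⊢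
        refine (sum_le_sum fun ξ _ => mul_le_of_le_one_right (hW0 ξ) ?_).trans hS
        exact prod_le_one (fun _ _ => abs_nonneg _) fun _ _ => abs_charCos_le_one _
      simp only [hempty, filter_false, card_empty, Nat.cast_zero]
      have := sum_nonneg fun ξ (_ : ξ ∈ univ) => hW0 ξ
      positivity

open scoped Classical in
/-- Few vectors keep a spread-out weight from dissipating. -/
lemma card_one_lt_sum_le {ι : Type*} [Fintype ι] (hq : Odd q) (k : ℕ) {δ : ℝ} (W : ZMod q → ℝ)
    (hW0 : ∀ ξ, 0 ≤ W ξ) (hWδ : ∀ ξ, W ξ ≤ δ) :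
    (#{a : ι → ZMod q | 1 < ∑ ξ, W ξ * ∏ i, |charCos (a i * ξ)|} : ℝ) ≤
      (((25 / 32) ^ k + 64 * δ) * q) ^ Fintype.card ι * (∑ ξ, W ξ) ^ k := by
  refine le_trans (le_of_eq ?_) (card_fin_one_lt_sum_le hq k (Fintype.card ι) W hW0 hWδ)
  let e := Fintype.equivFin ι
  simp_rw [natCast_card_filter]
  rw [← (Equiv.arrowCongr e (Equiv.refl (ZMod q))).sum_comp]
  refine sum_congr rfl fun a _ => ?_
  have : ∀ ξ, ∏ i, |charCos (a i * ξ)| =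
      ∏ i, |charCos ((Equiv.arrowCongr e (Equiv.refl (ZMod q))) a i * ξ)| := by
    intro ξ
    rw [← e.prod_comp]
    simp
  simp_rw [this]

end smoothing

lemma abs_im_pow_le {w : ℂ} (hw : ‖w‖ = 1) (N : ℕ) : |(w ^ N).im| ≤ N * |w.im| := by
  induction N with
  | zero => simp
  | succ N ih =>
    have h1 : |w.re| ≤ 1 := hw ▸ Complex.abs_re_le_norm w
    have h2 : |(w ^ N).re| ≤ 1 := by
      have := Complex.abs_re_le_norm (w ^ N)
      rwa [norm_pow, hw, one_pow] at this
    rw [pow_succ, Complex.mul_im]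
    calc |(w ^ N).re * w.im + (w ^ N).im * w.re|
        ≤ |(w ^ N).re| * |w.im| + |(w ^ N).im| * |w.re| := by
          rw [← abs_mul, ← abs_mul]; exact abs_add_le _ _
      _ ≤ 1 * |w.im| + |(w ^ N).im| * 1 := by gcongr
      _ ≤ _ := by push_cast; linarith

lemma centralBinom_div_four_pow_sq_le (l : ℕ) :
    ((l.centralBinom : ℝ) / 4 ^ l) ^ 2 ≤ 1 / (2 * l + 1) := by
  induction l with
  | zero => simp
  | succ l ih =>
    have h : ((l + 1).centralBinom : ℝ) / 4 ^ (l + 1) =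
        (2 * l + 1) / (2 * (l + 1)) * (l.centralBinom / 4 ^ l) := by
      have := Nat.succ_mul_centralBinom_succ l
      have h' : ((l : ℝ) + 1) * (l + 1).centralBinom = 2 * (2 * l + 1) * l.centralBinom := by
        exact_mod_cast this
      rw [pow_succ]
      field_simp
      linear_combination 2 * h'
    rw [h, mul_pow]
    calc _ ≤ ((2 * l + 1) / (2 * (l + 1)) : ℝ) ^ 2 * (1 / (2 * l + 1)) := by gcongr
      _ ≤ _ := by
        push_cast
        rw [div_pow, div_mul_div_comm, div_le_div_iff₀ (by positivity) (by positivity)]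
        have : (0 : ℝ) ≤ l := by positivity
        nlinarith [mul_nonneg this this]

section charCos

variable {q : ℕ} [NeZero q]

lemma sum_charCos_pow (hq : Odd q) (l : ℕ) (ξ : ZMod q)
    (hξ : ∀ N : ℕ, 1 ≤ N → N ≤ l → (N : ZMod q) * ξ ≠ 0) :
    ∑ u : ZMod q, charCos (u * ξ) ^ (2 * l) = q * (l.centralBinom / 4 ^ l) := by
  have h2 : IsUnit (2 : ZMod q) := by
    have := (ZMod.isUnit_iff_coprime 2 q).2 (Nat.coprime_two_left.2 hq)
    exact_mod_cast this
  have hexp : ∀ u : ZMod q, (2 * charCos (u * ξ) : ℂ) ^ (2 * l) =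
      ∑ i ∈ range (2 * l + 1),
        ZMod.stdAddChar (u * (2 * (((i : ZMod q) - (l : ZMod q)) * ξ))) * ((2 * l).choose i : ℂ) := by
    intro u
    rw [two_mul_charCos, add_pow]
    refine sum_congr rfl fun i hi => ?_
    have hi' : i ≤ 2 * l := by simpa [Nat.lt_succ_iff] using hi
    rw [← AddChar.map_nsmul_eq_pow, ← AddChar.map_nsmul_eq_pow, ← AddChar.map_add_eq_mul]
    congr 2
    simp only [nsmul_eq_mul, Nat.cast_sub hi']
    push_cast
    ring
  have hzero : ∀ i ∈ range (2 * l + 1), 2 * (((i : ZMod q) - (l : ZMod q)) * ξ) = 0 ↔ i = l := by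
    intro i hi
    have hi' : i ≤ 2 * l := by simpa [Nat.lt_succ_iff] using hi
    rw [h2.mul_right_eq_zero]
    refine ⟨fun h => ?_, fun h => by simp [h]⟩
    by_contra hne
    rcases lt_or_gt_of_ne hne with hlt | hgt
    · refine hξ (l - i) (by omega) (by omega) ?_
      rw [Nat.cast_sub hlt.le]
      linear_combination -h
    · refine hξ (i - l) (by omega) (by omega) ?_
      rw [Nat.cast_sub hgt.le]
      exact h
  have hc : ((4 ^ l * ∑ u : ZMod q, charCos (u * ξ) ^ (2 * l) : ℝ) : ℂ) =
      ((q * l.centralBinom : ℝ) : ℂ) := by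
    push_cast
    rw [mul_sum]
    have : ∀ u : ZMod q, (4 : ℂ) ^ l * (charCos (u * ξ) : ℂ) ^ (2 * l) =
        (2 * charCos (u * ξ) : ℂ) ^ (2 * l) := by
      intro u
      rw [mul_pow, pow_mul (2 : ℂ)]
      norm_num
    simp_rw [this, hexp]
    rw [sum_comm]
    simp_rw [← sum_mul, sum_stdAddChar_mul]
    rw [sum_eq_single l]
    · simp [Nat.centralBinom]
    · intro i hi hne
      rw [if_neg (by rw [hzero i hi]; exact hne), zero_mul]
    · intro h
      exact absurd (by simp; omega) h
  have : 4 ^ l * ∑ u : ZMod q, charCos (u * ξ) ^ (2 * l) = q * l.centralBinom := by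
    exact_mod_cast hc
  field_simp
  linear_combination this

lemma charCos_sq_le_of_three_mul_eq_zero {N : ℕ} (y : ZMod q) (hz : (N : ZMod q) * y ≠ 0)
    (h3 : 3 * ((N : ZMod q) * y) = 0) : 3 / 4 ≤ (N : ℝ) ^ 2 * (1 - charCos y ^ 2) := by
  set w := ZMod.stdAddChar y with hw
  have hw1 : ‖w‖ = 1 := AddChar.norm_apply _ y
  have hwN : w ^ N = ZMod.stdAddChar ((N : ZMod q) * y) := by
    rw [hw, ← AddChar.map_nsmul_eq_pow, nsmul_eq_mul]
  have hne : w ^ N ≠ 1 := by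
    rw [hwN, ← AddChar.map_zero_eq_one (ZMod.stdAddChar (N := q))]
    exact fun h => hz (ZMod.injective_stdAddChar h)
  have hcube : (w ^ N) ^ 3 = 1 := by
    rw [hwN, ← AddChar.map_nsmul_eq_pow, nsmul_eq_mul]
    push_cast
    rw [h3, AddChar.map_zero_eq_one]
  set v := w ^ N with hv
  have hquad : v ^ 2 + v + 1 = 0 := by
    have : (v - 1) * (v ^ 2 + v + 1) = 0 := by linear_combination hcube
    exact (mul_eq_zero.1 this).resolve_left (sub_ne_zero.2 hne)
  have hvn : v.re ^ 2 + v.im ^ 2 = 1 := by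
    have : ‖v‖ = 1 := by rw [hv, norm_pow, hw1, one_pow]
    rw [← Complex.sq_norm_sub_sq_re]
    rw [this]; ring
  have hre := congrArg Complex.re hquad
  simp [sq] at hre
  have him : v.im ^ 2 = 3 / 4 := by
    have h1 : v.re * (2 * v.re + 1) = 0 := by nlinarith
    have h2 : v.re ≠ 0 := by
      intro h0
      rw [h0] at hre hvn
      have him := congrArg Complex.im hquad
      simp [sq] at him
      rw [h0] at him
      nlinarith
    have h3 : v.re = -1 / 2 := by
      have := (mul_eq_zero.1 h1).resolve_left h2
      linarith
    rw [h3] at hvn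
    nlinarith
  have hwn : charCos y ^ 2 + w.im ^ 2 = 1 := by
    rw [charCos, ← hw, ← Complex.sq_norm_sub_sq_re, hw1]; ring
  have hle := abs_im_pow_le hw1 N
  rw [← hv] at hle
  have := pow_le_pow_left₀ (abs_nonneg _) hle 2
  rw [sq_abs, him, mul_pow, sq_abs] at this
  rw [show 1 - charCos y ^ 2 = w.im ^ 2 by linarith]
  exact this

end charCos

lemma charCos_sq_le_of_small_order {j l N : ℕ} (y : ZMod (3 ^ j)) (hy : y ≠ 0) (hN : 1 ≤ N)
    (hNl : N ≤ l) (hNy : (N : ZMod (3 ^ j)) * y = 0) :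
    charCos y ^ 2 ≤ 1 - 3 / (4 * l ^ 2) := by
  have hdvd : addOrderOf y ∣ 3 ^ j := by
    rw [addOrderOf_dvd_iff_nsmul_eq_zero, nsmul_eq_mul]
    have : ((3 ^ j : ℕ) : ZMod (3 ^ j)) = 0 := ZMod.natCast_self _
    rw [this, zero_mul]
  have hdvdN : addOrderOf y ∣ N := by
    rwa [addOrderOf_dvd_iff_nsmul_eq_zero, nsmul_eq_mul]
  obtain ⟨i, -, hi⟩ := (Nat.dvd_prime_pow Nat.prime_three).1 hdvd
  have hi0 : i ≠ 0 := by
    rintro rfl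
    rw [pow_zero, AddMonoid.addOrderOf_eq_one_iff] at hi
    exact hy hi
  obtain ⟨k, rfl⟩ := Nat.exists_eq_succ_of_ne_zero hi0
  have hle : 3 ^ (k + 1) ≤ N := hi ▸ Nat.le_of_dvd hN hdvdN
  have hkl : 3 ^ k ≤ l := (Nat.pow_le_pow_right (by norm_num) k.le_succ).trans (hle.trans hNl)
  have hz : ((3 ^ k : ℕ) : ZMod (3 ^ j)) * y ≠ 0 := by
    rw [← nsmul_eq_mul]
    intro h
    have := Nat.le_of_dvd (by positivity) (addOrderOf_dvd_of_nsmul_eq_zero h)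
    rw [hi, pow_succ] at this
    have : 0 < 3 ^ k := by positivity
    omega
  have h3 : 3 * (((3 ^ k : ℕ) : ZMod (3 ^ j)) * y) = 0 := by
    have := addOrderOf_nsmul_eq_zero y
    rw [hi, nsmul_eq_mul] at this
    rw [← this, pow_succ]
    push_cast
    ring
  have hmain := charCos_sq_le_of_three_mul_eq_zero y hz h3
  have hs : 0 ≤ 1 - charCos y ^ 2 := by
    have := (sq_le_one_iff_abs_le_one _).2 (abs_charCos_le_one y)
    linarith
  have hl : (0 : ℝ) < l := by exact_mod_cast hN.trans hNl
  have h2 : (3 : ℝ) / 4 ≤ l ^ 2 * (1 - charCos y ^ 2) := by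
    refine hmain.trans ?_
    gcongr
  have : 3 / (4 * (l : ℝ) ^ 2) ≤ 1 - charCos y ^ 2 := by
    rw [div_le_iff₀ (by positivity)]
    linarith
  linarith

open scoped Classical in
/-- Few vectors of units are correlated with a nontrivial character. -/
lemma card_unit_vectors_correlated_le {ι : Type*} [Fintype ι] (j l : ℕ) {δ : ℝ} (hδ : 0 < δ)
    (hsmall : (1 - 3 / (4 * l ^ 2) : ℝ) ^ Fintype.card ι ≤ δ ^ 2) :
    (#{b : ι → ZMod (3 ^ j) | (∀ i, IsUnit (b i)) ∧
        ∃ ξ : ZMod (3 ^ j), ξ ≠ 0 ∧ δ < ∏ i, |charCos (b i * ξ)|} : ℝ) ≤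
      3 ^ j * ((3 ^ j * (l.centralBinom / 4 ^ l)) ^ Fintype.card ι / δ ^ (2 * l)) := by
  set q := 3 ^ j with hqdef
  have hq : Odd q := Odd.pow (by decide)
  have hsub : ({b : ι → ZMod q | (∀ i, IsUnit (b i)) ∧
      ∃ ξ : ZMod q, ξ ≠ 0 ∧ δ < ∏ i, |charCos (b i * ξ)|} : Finset (ι → ZMod q)) ⊆
      (univ : Finset (ZMod q)).biUnion fun ξ =>
        {b | (∀ i, IsUnit (b i)) ∧ ξ ≠ 0 ∧ δ < ∏ i, |charCos (b i * ξ)|} := by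
    intro b hb
    simp only [mem_filter, mem_univ, true_and, mem_biUnion] at hb ⊢
    obtain ⟨hu, ξ, h⟩ := hb
    exact ⟨ξ, hu, h⟩
  have hone : ∀ ξ : ZMod q,
      (#{b : ι → ZMod q | (∀ i, IsUnit (b i)) ∧ ξ ≠ 0 ∧ δ < ∏ i, |charCos (b i * ξ)|} : ℝ) ≤
        (q * (l.centralBinom / 4 ^ l)) ^ Fintype.card ι / δ ^ (2 * l) := by
    intro ξ
    by_cases hξ : ∀ N : ℕ, 1 ≤ N → N ≤ l → (N : ZMod q) * ξ ≠ 0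
    · rw [natCast_card_filter]
      have hpt : ∀ b : ι → ZMod q, (if (∀ i, IsUnit (b i)) ∧ ξ ≠ 0 ∧
          δ < ∏ i, |charCos (b i * ξ)| then (1 : ℝ) else 0) ≤
          (∏ i, charCos (b i * ξ) ^ (2 * l)) / δ ^ (2 * l) := by
        intro b
        have heq : ∏ i, charCos (b i * ξ) ^ (2 * l) =
            (∏ i, |charCos (b i * ξ)|) ^ (2 * l) := by
          rw [← prod_pow]
          refine prod_congr rfl fun i _ => ?_
          rw [(even_two_mul l).pow_abs]
        rw [heq]
        split_ifs with h
        · rw [le_div_iff₀ (by positivity), one_mul]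
          exact pow_le_pow_left₀ hδ.le h.2.2.le _
        · positivity
      refine (sum_le_sum fun b _ => hpt b).trans (le_of_eq ?_)
      rw [← sum_div, ← sum_charCos_pow hq l ξ hξ]
      congr 1
      rw [← Fintype.piFinset_univ, ← prod_univ_sum (fun _ : ι => (univ : Finset (ZMod q)))
        (fun _ u => charCos (u * ξ) ^ (2 * l))]
      simp
    · push Not at hξ
      obtain ⟨N, hN, hNl, hN0⟩ := hξ
      have : ({b : ι → ZMod q | (∀ i, IsUnit (b i)) ∧ ξ ≠ 0 ∧
          δ < ∏ i, |charCos (b i * ξ)|} : Finset (ι → ZMod q)) = ∅ := by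
        rw [filter_eq_empty_iff]
        rintro b - ⟨hu, hne, hlt⟩
        have hle : (∏ i, |charCos (b i * ξ)|) ^ 2 ≤
            (1 - 3 / (4 * l ^ 2) : ℝ) ^ Fintype.card ι := by
          rw [← prod_pow, Fintype.card, ← prod_const]
          refine prod_le_prod (fun _ _ => by positivity) fun i _ => ?_
          rw [sq_abs]
          refine charCos_sq_le_of_small_order _ ?_ hN hNl ?_
          · rwa [Ne, (hu i).mul_right_eq_zero]
          · rw [mul_left_comm, hN0, mul_zero]
        have := pow_lt_pow_left₀ hlt hδ.le two_ne_zero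
        linarith
      rw [this]
      simp only [card_empty, Nat.cast_zero]
      positivity
  calc _ ≤ ((#((univ : Finset (ZMod q)).biUnion fun ξ =>
        {b : ι → ZMod q | (∀ i, IsUnit (b i)) ∧ ξ ≠ 0 ∧ δ < ∏ i, |charCos (b i * ξ)|}) : ℕ) : ℝ) := by
        exact_mod_cast card_le_card hsub
    _ ≤ ∑ ξ : ZMod q, (#{b : ι → ZMod q | (∀ i, IsUnit (b i)) ∧ ξ ≠ 0 ∧
          δ < ∏ i, |charCos (b i * ξ)|} : ℝ) := by
        exact_mod_cast card_biUnion_le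
    _ ≤ ∑ ξ : ZMod q, (q * (l.centralBinom / 4 ^ l) : ℝ) ^ Fintype.card ι / δ ^ (2 * l) :=
        sum_le_sum fun ξ _ => hone ξ
    _ = _ := by
        rw [sum_const, card_univ, ZMod.card, nsmul_eq_mul, hqdef]
        push_cast
        rfl

open scoped Classical in
lemma card_biased_vectors_units_on_le {n j l k : ℕ} {δ : ℝ} (hδ : 0 < δ) (I : Finset (Fin n))
    (hsmall : (1 - 3 / (4 * l ^ 2) : ℝ) ^ #I ≤ δ ^ 2) :
    (#{u : Fin n → ZMod (3 ^ j) | (∀ i ∈ I, IsUnit (u i)) ∧ 2 / 3 ^ j < signProb u} : ℝ) ≤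
      (3 ^ j) ^ n * (3 ^ j * ((l.centralBinom / 4 ^ l) ^ #I / δ ^ (2 * l)) +
        ((25 / 32) ^ k + 64 * δ) ^ (n - #I) * (3 ^ j) ^ k) := by
  have hq : Odd (3 ^ j) := Odd.pow (by decide)
  let B := {i : Fin n // i ∈ I} → ZMod (3 ^ j)
  let A := {i : Fin n // i ∉ I} → ZMod (3 ^ j)
  let E : Finset B := {b | (∀ i, IsUnit (b i)) ∧
    ∃ ξ : ZMod (3 ^ j), ξ ≠ 0 ∧ δ < ∏ i, |charCos (b i * ξ)|}
  let W : B → ZMod (3 ^ j) → ℝ := fun b ξ => if ξ ≠ 0 then ∏ i, |charCos (b i * ξ)| else 0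
  have hcI : Fintype.card {i : Fin n // i ∈ I} = #I := Fintype.card_coe I
  have hcIc : Fintype.card {i : Fin n // i ∉ I} = n - #I := by
    rw [Fintype.card_subtype_compl, hcI, Fintype.card_fin]
  have hIn : #I ≤ n := by simpa using card_le_univ I
  have hcA : (Fintype.card A : ℝ) = (3 ^ j) ^ (n - #I) := by
    simp [A, ZMod.card, hcIc]
  have hcB : (Fintype.card B : ℝ) = (3 ^ j) ^ #I := by
    simp [B, ZMod.card]
  have hW0 : ∀ b ξ, 0 ≤ W b ξ := by
    intro b ξ
    simp only [W]
    split_ifs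
    · exact prod_nonneg fun _ _ => abs_nonneg _
    · rfl
  have hW1 : ∀ b ξ, W b ξ ≤ 1 := by
    intro b ξ
    simp only [W]
    split_ifs
    · exact prod_le_one (fun _ _ => abs_nonneg _) fun _ _ => abs_charCos_le_one _
    · exact zero_le_one
  have hWsum : ∀ b, ∑ ξ, W b ξ ≤ 3 ^ j := by
    intro b
    refine (sum_le_sum fun ξ _ => hW1 b ξ).trans (le_of_eq ?_)
    simp [ZMod.card]
  let e := Equiv.piEquivPiSubtypeProd (fun i : Fin n => i ∈ I) (fun _ => ZMod (3 ^ j))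
  let F : B × A → ℝ := fun p => (if p.1 ∈ E then (1 : ℝ) else 0) +
    if p.1 ∉ E ∧ (∀ i, IsUnit (p.1 i)) ∧ 1 < ∑ ξ, W p.1 ξ * ∏ i, |charCos (p.2 i * ξ)|
    then (1 : ℝ) else 0
  have hpt : ∀ u : Fin n → ZMod (3 ^ j),
      (if (∀ i ∈ I, IsUnit (u i)) ∧ 2 / 3 ^ j < signProb u then (1 : ℝ) else 0) ≤ F (e u) := by
    intro u
    simp only [F]
    by_cases h : (∀ i ∈ I, IsUnit (u i)) ∧ 2 / 3 ^ j < signProb u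
    · rw [if_pos h]
      obtain ⟨hu, hlt⟩ := h
      have hu' : ∀ i, IsUnit ((e u).1 i) := fun i => hu i i.2
      have hsum : 1 < ∑ ξ, W (e u).1 ξ * ∏ i, |charCos ((e u).2 i * ξ)| := by
        have h1 := hlt.trans_le (signProb_le_sum_prod_abs u)
        push_cast at h1
        rw [div_lt_div_iff_of_pos_right (by positivity)] at h1
        have h2 : ∑ ξ, W (e u).1 ξ * ∏ i, |charCos ((e u).2 i * ξ)| =
            ∑ ξ : ZMod (3 ^ j) with ξ ≠ 0, ∏ i, |charCos (u i * ξ)| := by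
          rw [sum_filter]
          refine sum_congr rfl fun ξ _ => ?_
          simp only [W, ite_mul, zero_mul]
          refine if_congr Iff.rfl ?_ rfl
          convert Fintype.prod_subtype_mul_prod_subtype (fun i => i ∈ I)
            (fun i => |charCos (u i * ξ)|) <;> rfl
        rw [h2]
        linarith
      by_cases hE : (e u).1 ∈ E
      · simp [hE]
      · simp only [hE, if_false, zero_add]
        rw [if_pos ⟨not_false, hu', hsum⟩]
    · rw [if_neg h]
      positivity
  have hA : ∀ b : B, (∑ a : A, if b ∉ E ∧ (∀ i, IsUnit (b i)) ∧
      1 < ∑ ξ, W b ξ * ∏ i, |charCos (a i * ξ)| then (1 : ℝ) else 0) ≤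
      (((25 / 32) ^ k + 64 * δ) * 3 ^ j) ^ (n - #I) * (3 ^ j) ^ k := by
    intro b
    by_cases hb : b ∉ E ∧ (∀ i, IsUnit (b i))
    · have hWδ : ∀ ξ, W b ξ ≤ δ := by
        intro ξ
        simp only [W]
        split_ifs with hξ
        · by_contra hlt
          exact hb.1 (mem_filter.2 ⟨mem_univ _, hb.2, ξ, hξ, not_le.1 hlt⟩)
        · exact hδ.le
      have := card_one_lt_sum_le (ι := {i : Fin n // i ∉ I}) hq k (W b) (hW0 b) hWδ
      rw [natCast_card_filter, hcIc] at this
      have h1 : ∀ p : Prop, (b ∉ E ∧ (∀ i, IsUnit (b i)) ∧ p) ↔ p := fun p => by tauto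
      simp_rw [h1]
      refine (le_of_eq (sum_congr (by congr!) fun _ _ => rfl)).trans (this.trans ?_)
      push_cast
      gcongr
      exact hWsum b
    · have h1 : ∀ p : Prop, (b ∉ E ∧ (∀ i, IsUnit (b i)) ∧ p) ↔ False := fun p => by tauto
      simp_rw [h1]
      simp only [if_false, sum_const_zero]
      positivity
  have hEcard : (#E : ℝ) ≤ 3 ^ j * ((3 ^ j * (l.centralBinom / 4 ^ l)) ^ #I / δ ^ (2 * l)) := by
    have := card_unit_vectors_correlated_le (ι := {i : Fin n // i ∈ I}) j l hδ
      (by rw [hcI]; exact hsmall)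
    rw [hcI] at this
    convert this
  have hsplit : ((3 : ℝ) ^ j) ^ n = (3 ^ j) ^ #I * (3 ^ j) ^ (n - #I) := by
    rw [← pow_add, Nat.add_sub_cancel' hIn]
  rw [natCast_card_filter]
  refine (sum_le_sum fun u _ => hpt u).trans ?_
  rw [Fintype.sum_equiv e (fun u => F (e u)) F fun _ => rfl, Fintype.sum_prod_type]
  simp only [F, sum_add_distrib]
  have h1 : ∑ b : B, ∑ _a : A, (if b ∈ E then (1 : ℝ) else 0) = #E * (3 ^ j) ^ (n - #I) := by
    simp only [sum_const, card_univ, nsmul_eq_mul, hcA]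
    rw [← mul_sum, mul_comm]
    congr 1
    simp
  have h2 := (sum_le_sum fun b (_ : b ∈ univ) => hA b).trans (le_of_eq (by
    rw [sum_const, card_univ, nsmul_eq_mul, hcB]))
  rw [h1]
  refine (add_le_add (mul_le_mul_of_nonneg_right hEcard (by positivity)) h2).trans (le_of_eq ?_)
  rw [hsplit, mul_pow, mul_pow]
  ring

open scoped Classical in
/-- Vectors modulo a power of three with many unit entries and a zero-sum probability exceeding
twice the uniform one are superexponentially rare. -/
lemma exists_card_biased_vectors_le {η : ℝ} (hη : 0 < η) (hη1 : η ≤ 1) :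
    ∃ n₀ : ℕ, ∀ n ≥ n₀, ∀ j : ℕ, (3 ^ j : ℝ) ≤ (10 / 9) ^ n →
      (#{u : Fin n → ZMod (3 ^ j) | n / 16 ≤ #{i | IsUnit (u i)} ∧ 2 / 3 ^ j < signProb u} : ℝ) ≤
        (η * 3 ^ j) ^ n := by
  obtain ⟨k, hk⟩ := exists_pow_lt_of_lt_one (show 0 < (η / 4) ^ 2 / 2 by positivity)
    (show (2500 / 2592 : ℝ) < 1 by norm_num)
  obtain ⟨δ, hδ, hδeq⟩ : ∃ δ : ℝ, 0 < δ ∧ (100 / 81) ^ k * (64 * δ) = (η / 4) ^ 2 / 2 :=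
    ⟨(η / 4) ^ 2 / 2 / ((100 / 81) ^ k * 64), by positivity, by field_simp⟩
  obtain ⟨l, hl1, hl⟩ : ∃ l : ℕ, 1 ≤ l ∧ (l.centralBinom : ℝ) / 4 ^ l ≤ (η / 16) ^ 32 := by
    obtain ⟨l, hl⟩ := exists_nat_gt (1 / ((η / 16) ^ 32) ^ 2)
    refine ⟨l + 1, by omega, ?_⟩
    refine le_of_sq_le_sq ?_ (by positivity)
    refine (centralBinom_div_four_pow_sq_le _).trans ?_
    rw [div_le_comm₀ (by positivity) (by positivity)]
    push_cast
    have : (0 : ℝ) ≤ l := by positivity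
    linarith
  have hθ : (1 - 3 / (4 * l ^ 2) : ℝ) < 1 := by
    have : (0 : ℝ) < l := by exact_mod_cast hl1
    have : 0 < 3 / (4 * (l : ℝ) ^ 2) := by positivity
    linarith
  have hθ0 : (0 : ℝ) ≤ 1 - 3 / (4 * l ^ 2) := by
    have : (1 : ℝ) ≤ l := by exact_mod_cast hl1
    rw [sub_nonneg, div_le_one (by positivity)]
    nlinarith
  obtain ⟨M, hM⟩ := exists_pow_lt_of_lt_one (show 0 < δ ^ 2 by positivity) hθ
  obtain ⟨T, hT⟩ := pow_unbounded_of_one_lt (1 / δ ^ (2 * l)) (show (1 : ℝ) < 2 by norm_num)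
  refine ⟨16 * M + T + 32, fun n hn j hj => ?_⟩
  set m := n / 16 with hm
  have hm32 : n ≤ 32 * m := by omega
  have hN2 : n ≤ 2 * (n - m) := by omega
  have hbound : ∀ I ∈ powersetCard m (univ : Finset (Fin n)),
      (#{u : Fin n → ZMod (3 ^ j) | (∀ i ∈ I, IsUnit (u i)) ∧ 2 / 3 ^ j < signProb u} : ℝ) ≤
        (3 ^ j) ^ n * (η / 2) ^ n := by
    intro I hI
    have hIm : #I = m := (mem_powersetCard.1 hI).2
    refine (card_biased_vectors_units_on_le (l := l) (k := k) hδ I ?_).trans ?_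
    · rw [hIm]
      refine (pow_le_pow_of_le_one hθ0 hθ.le ?_).trans hM.le
      omega
    · gcongr
      rw [hIm]
      have hfirst : (3 : ℝ) ^ j * ((l.centralBinom / 4 ^ l) ^ m / δ ^ (2 * l)) ≤ (η / 4) ^ n := by
        have e1 : (3 : ℝ) ^ j ≤ 2 ^ n := hj.trans (by gcongr; norm_num)
        have e2 : ((l.centralBinom : ℝ) / 4 ^ l) ^ m ≤ (η / 16) ^ n := by
          calc _ ≤ ((η / 16) ^ 32) ^ m := by gcongr
            _ = (η / 16) ^ (32 * m) := (pow_mul _ _ _).symm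
            _ ≤ _ := pow_le_pow_of_le_one (by positivity) (by linarith) hm32
        have e3 : 1 / δ ^ (2 * l) ≤ 2 ^ n :=
          hT.le.trans (pow_le_pow_right₀ one_le_two (by omega))
        calc (3 : ℝ) ^ j * ((l.centralBinom / 4 ^ l) ^ m / δ ^ (2 * l))
            = 3 ^ j * ((l.centralBinom / 4 ^ l) ^ m * (1 / δ ^ (2 * l))) := by ring
          _ ≤ 2 ^ n * ((η / 16) ^ n * 2 ^ n) := by gcongr
          _ = (η / 4) ^ n := by
            rw [← mul_pow, ← mul_pow]
            congr 1
            ring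
      have hsecond : ((25 / 32) ^ k + 64 * δ) ^ (n - m) * ((3 : ℝ) ^ j) ^ k ≤ (η / 4) ^ n := by
        have e1 : ((3 : ℝ) ^ j) ^ k ≤ ((100 / 81) ^ k) ^ (n - m) := by
          calc ((3 : ℝ) ^ j) ^ k ≤ ((10 / 9) ^ n) ^ k := by gcongr
            _ ≤ ((10 / 9) ^ (2 * (n - m))) ^ k := by
              gcongr
              norm_num
            _ = _ := by
              rw [pow_mul, ← pow_mul, mul_comm (n - m), pow_mul]
              norm_num
        have e2 : ((25 / 32) ^ k + 64 * δ) * (100 / 81) ^ k ≤ (η / 4) ^ 2 := by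
          have : ((25 / 32 : ℝ)) ^ k * (100 / 81) ^ k = (2500 / 2592) ^ k := by
            rw [← mul_pow]
            norm_num
          nlinarith
        calc _ ≤ ((25 / 32) ^ k + 64 * δ) ^ (n - m) * ((100 / 81) ^ k) ^ (n - m) := by gcongr
          _ = (((25 / 32) ^ k + 64 * δ) * (100 / 81) ^ k) ^ (n - m) := (mul_pow _ _ _).symm
          _ ≤ ((η / 4) ^ 2) ^ (n - m) := by gcongr
          _ = (η / 4) ^ (2 * (n - m)) := (pow_mul _ _ _).symm
          _ ≤ _ := pow_le_pow_of_le_one (by positivity) (by linarith) hN2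
      have hhalf : 2 * (η / 4) ^ n ≤ (η / 2) ^ n := by
        have : (η / 2) ^ n = 2 ^ n * (η / 4) ^ n := by
          rw [← mul_pow]
          congr 1
          ring
        rw [this]
        gcongr
        exact le_self_pow₀ one_le_two (by omega)
      linarith
  have hsub : ({u : Fin n → ZMod (3 ^ j) | m ≤ #{i | IsUnit (u i)} ∧ 2 / 3 ^ j < signProb u} :
      Finset (Fin n → ZMod (3 ^ j))) ⊆ (powersetCard m (univ : Finset (Fin n))).biUnion fun I =>
        {u | (∀ i ∈ I, IsUnit (u i)) ∧ 2 / 3 ^ j < signProb u} := by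
    intro u hu
    simp only [mem_filter, mem_univ, true_and, mem_biUnion] at hu ⊢
    obtain ⟨I, hI, hIm⟩ := exists_subset_card_eq hu.1
    refine ⟨I, mem_powersetCard.2 ⟨subset_univ _, hIm⟩, fun i hi => ?_, hu.2⟩
    simpa using hI hi
  calc _ ≤ ((#((powersetCard m (univ : Finset (Fin n))).biUnion fun I =>
        {u : Fin n → ZMod (3 ^ j) | (∀ i ∈ I, IsUnit (u i)) ∧ 2 / 3 ^ j < signProb u}) : ℕ) : ℝ) := by
        exact_mod_cast card_le_card hsub
    _ ≤ ∑ I ∈ powersetCard m (univ : Finset (Fin n)),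
          (#{u : Fin n → ZMod (3 ^ j) |
            (∀ i ∈ I, IsUnit (u i)) ∧ 2 / 3 ^ j < signProb u} : ℝ) := by
        exact_mod_cast card_biUnion_le
    _ ≤ ∑ _I ∈ powersetCard m (univ : Finset (Fin n)), (3 ^ j : ℝ) ^ n * (η / 2) ^ n :=
        sum_le_sum hbound
    _ = n.choose m * ((3 ^ j : ℝ) ^ n * (η / 2) ^ n) := by
        rw [sum_const, card_powersetCard, card_univ, Fintype.card_fin, nsmul_eq_mul]
    _ ≤ 2 ^ n * ((3 ^ j : ℝ) ^ n * (η / 2) ^ n) := by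
        gcongr
        exact_mod_cast Nat.choose_le_two_pow n m
    _ = _ := by
        rw [← mul_pow, ← mul_pow]
        congr 1
        ring

section signProb

variable {ι R S : Type*} [Fintype ι] [Ring R] [Ring S]

lemma map_signOf (f : R →+* S) (b : Bool) : f (signOf R b) = signOf S b := by
  cases b <;> simp [signOf]

lemma signProb_nonneg (u : ι → R) : 0 ≤ signProb u := by
  unfold signProb
  positivity

lemma signProb_le_one (u : ι → R) : signProb u ≤ 1 := by
  classical
  unfold signProb
  rw [div_le_one (by positivity)]
  refine (Nat.cast_le.2 (card_le_univ _)).trans (le_of_eq ?_)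
  simp

lemma signProb_le_map (f : R →+* S) (u : ι → R) : signProb u ≤ signProb fun i => f (u i) := by
  unfold signProb
  gcongr with b
  intro h
  have := congrArg f h
  simpa [map_sum, map_signOf] using this

lemma signProb_le_half (u : ι → R) {i : ι} (hi : 2 * u i ≠ 0) : signProb u ≤ 1 / 2 := by
  classical
  let flip : (ι → Bool) → (ι → Bool) := fun b => Function.update b i (!b i)
  have hinv : Function.Involutive flip := fun b => by simp [flip]
  set Z : Finset (ι → Bool) := {b | ∑ i, signOf R (b i) * u i = 0} with hZ
  have hdisj : Disjoint Z (Z.image flip) := by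
    rw [disjoint_left]
    intro b hb hb'
    obtain ⟨b', hb1, hb2⟩ := mem_image.1 hb'
    have hb'' : flip b ∈ Z := by rw [← hb2, hinv b']; exact hb1
    have h1 := (mem_filter.1 hb).2
    have h2 := (mem_filter.1 hb'').2
    rw [← add_sum_erase univ _ (mem_univ i)] at h1 h2
    have h3 : ∑ k ∈ univ.erase i, signOf R (flip b k) * u k =
        ∑ k ∈ univ.erase i, signOf R (b k) * u k := by
      refine sum_congr rfl fun k hk => ?_
      simp [flip, Function.update_of_ne (ne_of_mem_erase hk)]
    rw [h3] at h2
    have h4 : signOf R (b i) * u i = signOf R (flip b i) * u i :=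
      add_right_cancel (h1.trans h2.symm)
    apply hi
    simp only [flip, Function.update_self] at h4
    rw [two_mul]
    cases hbi : b i
    · simp only [hbi, signOf, Bool.not_false, if_true, one_mul, Bool.false_eq_true, if_false,
        neg_mul] at h4
      nth_rewrite 1 [← h4]
      simp
    · simp only [hbi, signOf, Bool.not_true, if_true, one_mul, Bool.false_eq_true, if_false,
        neg_mul] at h4
      nth_rewrite 1 [h4]
      simp
  have hcard : #Z + #Z ≤ 2 ^ Fintype.card ι := by
    have h := card_le_univ (Z ∪ Z.image flip)
    rw [card_union_of_disjoint hdisj, card_image_of_injective _ hinv.injective] at h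
    simpa using h
  have h2 : (#Z : ℝ) + #Z ≤ 2 ^ Fintype.card ι := by exact_mod_cast hcard
  have h3 : signProb u = #Z / 2 ^ Fintype.card ι := by
    rw [signProb, hZ]
  rw [h3, div_le_iff₀ (by positivity)]
  linarith

end signProb

section counting

variable {n : ℕ}

open scoped Classical in
lemma card_sign_matrices_mul_eq_zero {R : Type*} [Ring R] (u : Fin n → R) :
    (#{b : Fin n → Fin n → Bool | ∀ i, ∑ j, signOf R (b i j) * u j = 0} : ℝ) =
      (2 ^ n * signProb u) ^ n := by
  have h : ({b : Fin n → Fin n → Bool | ∀ i, ∑ j, signOf R (b i j) * u j = 0} :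
      Finset (Fin n → Fin n → Bool)) =
      Fintype.piFinset fun _ => {s : Fin n → Bool | ∑ j, signOf R (s j) * u j = 0} := by
    ext b
    simp
  rw [h, Fintype.card_piFinset, prod_const, card_univ, Fintype.card_fin, signProb,
    Fintype.card_fin, mul_div_cancel₀ _ (by positivity)]
  push_cast
  congr!

open scoped Classical in
/-- The sign matrices whose kernel meets the set of vectors `T`. -/
noncomputable def kernelMeets {R : Type*} [Ring R] (T : Finset (Fin n → R)) :
    Finset (Fin n → Fin n → Bool) :=
  {b | ∃ u ∈ T, ∀ i, ∑ j, signOf R (b i j) * u j = 0}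

lemma mem_kernelMeets {R : Type*} [Ring R] {T : Finset (Fin n → R)} {b : Fin n → Fin n → Bool} :
    b ∈ kernelMeets T ↔ ∃ u ∈ T, ∀ i, ∑ j, signOf R (b i j) * u j = 0 := by
  simp [kernelMeets]

lemma card_kernelMeets_le {R : Type*} [Ring R] (T : Finset (Fin n → R))
    {p : ℝ} (hT : ∀ u ∈ T, signProb u ≤ p) :
    (#(kernelMeets T) : ℝ) ≤ (2 ^ n) ^ n * (#T * p ^ n) := by
  classical
  calc _ ≤ ((#(T.biUnion fun u =>
        {b : Fin n → Fin n → Bool | ∀ i, ∑ j, signOf R (b i j) * u j = 0}) : ℕ) : ℝ) := by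
        gcongr
        intro b hb
        simpa [mem_kernelMeets] using hb
    _ ≤ ∑ u ∈ T, (#{b : Fin n → Fin n → Bool | ∀ i, ∑ j, signOf R (b i j) * u j = 0} : ℝ) := by
        exact_mod_cast card_biUnion_le
    _ ≤ ∑ _u ∈ T, (2 ^ n * p) ^ n := by
        refine sum_le_sum fun u hu => ?_
        rw [card_sign_matrices_mul_eq_zero]
        have := signProb_nonneg u
        gcongr
        exact hT u hu
    _ = _ := by
        rw [sum_const, nsmul_eq_mul, mul_pow]
        ring

open scoped Classical in
lemma card_row_mul_eq_zero_le (i : Fin n) {p : ℝ} (hp : 0 ≤ p)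
    (f : ({k : Fin n // k ≠ i} → Fin n → Bool) → Fin n → ℤ) :
    (#{b : Fin n → Fin n → Bool | signProb (f fun k => b k) ≤ p ∧
      ∑ j, signOf ℤ (b i j) * f (fun k => b k) j = 0} : ℝ) ≤ (2 ^ n) ^ n * p := by
  let F : (Fin n → Bool) × ({k : Fin n // k ≠ i} → Fin n → Bool) → ℝ := fun x =>
    if signProb (f x.2) ≤ p ∧ ∑ j, signOf ℤ (x.1 j) * f x.2 j = 0 then 1 else 0
  rw [natCast_card_filter]
  refine (le_of_eq (Fintype.sum_equiv (Equiv.funSplitAt i (Fin n → Bool)) _ F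
    fun _ => rfl)).trans ?_
  rw [Fintype.sum_prod_type_right]
  have hone : ∀ c, ∑ s, F (s, c) ≤ 2 ^ n * p := by
    intro c
    simp only [F]
    by_cases h : signProb (f c) ≤ p
    · simp only [h, true_and]
      rw [← natCast_card_filter]
      refine le_trans (le_of_eq ?_) (mul_le_mul_of_nonneg_left h (by positivity))
      rw [signProb, Fintype.card_fin, mul_div_cancel₀ _ (by positivity)]
      congr!
    · simp only [h, false_and, if_false, sum_const_zero]
      positivity
  refine (sum_le_sum fun c _ => hone c).trans (le_of_eq ?_)
  have hn : n - 1 + 1 = n := Nat.sub_add_cancel (Fin.pos i)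
  rw [sum_const, card_univ, nsmul_eq_mul]
  have : (Fintype.card ({k : Fin n // k ≠ i} → Fin n → Bool) : ℝ) = (2 ^ n) ^ (n - 1) := by
    simp [Fintype.card_subtype_compl]
  rw [this]
  nth_rewrite 5 [← hn]
  rw [pow_succ]
  ring

open scoped Classical in
lemma card_sparse_le (m : ℕ) :
    (#{u : Fin n → ZMod 3 | #{i | u i ≠ 0} < m} : ℝ) ≤ 8 ^ m * (5 / 4) ^ n := by
  have hsum : ∑ u : Fin n → ZMod 3, ∏ i, (if u i ≠ 0 then (1 / 8 : ℝ) else 1) = (5 / 4) ^ n := by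
    rw [← Fintype.piFinset_univ, ← prod_univ_sum (fun _ : Fin n => (univ : Finset (ZMod 3)))
      (fun _ x => if x ≠ 0 then (1 / 8 : ℝ) else 1)]
    rw [prod_const, card_univ, Fintype.card_fin]
    congr 1
    have : (univ : Finset (ZMod 3)) = {0, 1, 2} := by decide
    rw [this, sum_insert (by decide), sum_insert (by decide), sum_singleton]
    rw [if_neg (by decide), if_pos (by decide), if_pos (by decide)]
    norm_num
  rw [natCast_card_filter, ← hsum, mul_sum]
  refine sum_le_sum fun u _ => ?_
  rw [prod_ite, prod_const, prod_const_one, mul_one]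
  split_ifs with h
  · have : (8 : ℝ) ^ m * (1 / 8) ^ #{i | u i ≠ 0} ≥ 8 ^ m * (1 / 8) ^ m := by
      refine mul_le_mul_of_nonneg_left ?_ (by positivity)
      exact pow_le_pow_of_le_one (by norm_num) (by norm_num) h.le
    rw [← mul_pow] at this
    norm_num at this ⊢
    exact this
  · positivity

lemma exists_not_three_dvd_of_kernel {b : Fin n → Fin n → Bool} {v : Fin n → ℤ} (hv : v ≠ 0)
    (hb : ∀ i, ∑ j, signOf ℤ (b i j) * v j = 0) :
    ∃ w : Fin n → ℤ, (∃ i, (w i : ZMod 3) ≠ 0) ∧ ∀ i, ∑ j, signOf ℤ (b i j) * w j = 0 := by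
  obtain ⟨i₀, hi₀⟩ := Function.ne_iff.1 hv
  obtain ⟨w, hw, hgcd⟩ := extract_gcd v (s := univ) ⟨i₀, mem_univ _⟩
  set g := univ.gcd v
  have hg : g ≠ 0 := by
    intro h
    apply hi₀
    rw [hw i₀ (mem_univ _), h, zero_mul, Pi.zero_apply]
  refine ⟨w, ?_, fun i => ?_⟩
  · by_contra! h
    have : (3 : ℤ) ∣ univ.gcd w := dvd_gcd fun i _ =>
      (ZMod.intCast_zmod_eq_zero_iff_dvd (w i) 3).1 (h i)
    rw [hgcd] at this
    norm_num at this
  · have := hb i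
    have h2 : g * ∑ j, signOf ℤ (b i j) * w j = 0 := by
      rw [← this, mul_sum]
      refine sum_congr rfl fun j _ => ?_
      rw [hw j (mem_univ _)]
      ring
    exact (mul_eq_zero.1 h2).resolve_left hg

end counting

lemma isUnit_intCast_three_pow_iff {j : ℕ} (hj : j ≠ 0) (x : ℤ) :
    IsUnit (x : ZMod (3 ^ j)) ↔ (x : ZMod 3) ≠ 0 := by
  rw [ZMod.coe_int_isUnit_iff_isCoprime, Nat.cast_pow, IsCoprime.pow_left_iff (by omega),
    ne_eq, ZMod.intCast_zmod_eq_zero_iff_dvd]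
  exact Int.prime_three.coprime_iff_not_dvd

lemma signProb_three_pow_succ_le {ι : Type*} [Fintype ι] (v : ι → ℤ) (j : ℕ) :
    (signProb fun i => (v i : ZMod (3 ^ (j + 1)))) ≤ signProb fun i => (v i : ZMod (3 ^ j)) := by
  refine (signProb_le_map (ZMod.castHom (pow_dvd_pow 3 j.le_succ) (ZMod (3 ^ j))) _).trans
    (le_of_eq ?_)
  simp only [map_intCast]

lemma signProb_le_or_exists_level {ι : Type*} [Fintype ι] (v : ι → ℤ) (J : ℕ) :
    (signProb fun i => (v i : ZMod (3 ^ J))) ≤ 2 / 3 ^ J ∨ ∃ j ∈ Icc 1 J,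
      2 / 3 ^ j < (signProb fun i => (v i : ZMod (3 ^ j))) ∧
      (signProb fun i => (v i : ZMod (3 ^ j))) ≤ 6 / 3 ^ j := by
  induction J with
  | zero =>
    left
    exact (signProb_le_one _).trans (by norm_num)
  | succ J ih =>
    rcases ih with h | ⟨j, hj, h⟩
    · by_cases h' : (signProb fun i => (v i : ZMod (3 ^ (J + 1)))) ≤ 2 / 3 ^ (J + 1)
      · exact Or.inl h'
      · refine Or.inr ⟨J + 1, by simp, not_le.1 h', ?_⟩
        refine ((signProb_three_pow_succ_le v J).trans h).trans (le_of_eq ?_)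
        rw [pow_succ]
        field_simp
        norm_num
    · exact Or.inr ⟨j, Icc_subset_Icc_right J.le_succ hj, h⟩

section counting

variable {n : ℕ}

lemma intCast_kernel {R : Type*} [Ring R] {b : Fin n → Fin n → Bool} {v : Fin n → ℤ}
    (hv : ∀ i, ∑ j, signOf ℤ (b i j) * v j = 0) (i : Fin n) :
    ∑ j, signOf R (b i j) * (v j : R) = 0 := by
  have hs (a : Bool) : ((signOf ℤ a : ℤ) : R) = signOf R a := map_signOf (Int.castRingHom R) a
  have := congrArg (Int.cast : ℤ → R) (hv i)
  simpa [hs] using this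

open scoped Classical in
/-- An integer vector, not divisible by `3`, orthogonal to all the given rows if there is one. -/
noncomputable def orthogonalVector {κ : Type*} (c : κ → Fin n → Bool) : Fin n → ℤ :=
  if h : ∃ v : Fin n → ℤ, (∃ i, (v i : ZMod 3) ≠ 0) ∧ ∀ k, ∑ j, signOf ℤ (c k j) * v j = 0
  then h.choose else 0

lemma orthogonalVector_spec {κ : Type*} {c : κ → Fin n → Bool} {v : Fin n → ℤ}
    (hv : ∃ i, (v i : ZMod 3) ≠ 0) (hc : ∀ k, ∑ j, signOf ℤ (c k j) * v j = 0) :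
    (∃ i, (orthogonalVector c i : ZMod 3) ≠ 0) ∧
      ∀ k, ∑ j, signOf ℤ (c k j) * orthogonalVector c j = 0 := by
  have h : ∃ v : Fin n → ℤ, (∃ i, (v i : ZMod 3) ≠ 0) ∧
    ∀ k, ∑ j, signOf ℤ (c k j) * v j = 0 := ⟨v, hv, hc⟩
  rw [orthogonalVector, dif_pos h]
  exact h.choose_spec

lemma det_signOf_eq_zero {b : Fin n → Fin n → Bool} (hb : (signMatrix n b).det = 0) :
    (Matrix.of fun i j => signOf ℤ (b i j)).det = 0 := by
  have h : signMatrix n b =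
      (Int.castRingHom ℝ).mapMatrix (Matrix.of fun i j => signOf ℤ (b i j)) := by
    ext i j
    simp only [RingHom.mapMatrix_apply, Matrix.map_apply, Matrix.of_apply, map_signOf]
    rfl
  rw [h, ← RingHom.map_det] at hb
  simpa using hb

lemma exists_kernel_of_det_eq_zero {b : Fin n → Fin n → Bool} (hb : (signMatrix n b).det = 0) :
    ∃ v : Fin n → ℤ, (∃ i, (v i : ZMod 3) ≠ 0) ∧ ∀ i, ∑ j, signOf ℤ (b i j) * v j = 0 := by
  obtain ⟨v, hv, h⟩ := Matrix.exists_mulVec_eq_zero_iff.2 (det_signOf_eq_zero hb)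
  exact exists_not_three_dvd_of_kernel hv fun i => congrFun h i

lemma exists_row_of_det_eq_zero {b : Fin n → Fin n → Bool} (hb : (signMatrix n b).det = 0) :
    ∃ i : Fin n, ∀ v : Fin n → ℤ, (∀ k : {k : Fin n // k ≠ i},
      ∑ j, signOf ℤ (b k j) * v j = 0) → ∑ j, signOf ℤ (b i j) * v j = 0 := by
  obtain ⟨w, hw, h⟩ := Matrix.exists_vecMul_eq_zero_iff.2 (det_signOf_eq_zero hb)
  obtain ⟨i, hi⟩ := Function.ne_iff.1 hw
  refine ⟨i, fun v hv => ?_⟩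
  have h1 : ∑ k, w k * ∑ j, signOf ℤ (b k j) * v j = 0 := by
    simp_rw [mul_sum]
    rw [sum_comm]
    refine sum_eq_zero fun j _ => ?_
    have h2 : ∑ k, w k * signOf ℤ (b k j) = 0 := congrFun h j
    simp_rw [← mul_assoc]
    rw [← sum_mul, h2, zero_mul]
  rw [sum_eq_single i (fun k _ hk => by rw [hv ⟨k, hk⟩, mul_zero]) (by simp)] at h1
  exact (mul_eq_zero.1 h1).resolve_left hi

open scoped Classical in
lemma singular_subset (J : ℕ) :
    ({b : Fin n → Fin n → Bool | (signMatrix n b).det = 0} : Finset _) ⊆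
      kernelMeets ({u | u ≠ 0 ∧ #{i | u i ≠ 0} < n / 16} : Finset (Fin n → ZMod 3)) ∪
      ((Icc 1 J).biUnion fun l => kernelMeets
        ({u | (n / 16 ≤ #{i | IsUnit (u i)} ∧ 2 / 3 ^ l < signProb u) ∧ signProb u ≤ 6 / 3 ^ l} :
          Finset (Fin n → ZMod (3 ^ l)))) ∪
      univ.biUnion fun i => {b : Fin n → Fin n → Bool |
        signProb (orthogonalVector fun k : {k : Fin n // k ≠ i} => b k) ≤ 2 / 3 ^ J ∧
        ∑ j, signOf ℤ (b i j) * orthogonalVector (fun k : {k : Fin n // k ≠ i} => b k) j = 0} := by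
  intro b hb
  replace hb := (mem_filter.1 hb).2
  by_cases hall : ∀ v : Fin n → ℤ, (∃ i, (v i : ZMod 3) ≠ 0) →
    (∀ i, ∑ j, signOf ℤ (b i j) * v j = 0) → signProb v ≤ 2 / 3 ^ J
  · obtain ⟨v, hv, hker⟩ := exists_kernel_of_det_eq_zero hb
    obtain ⟨i, hi⟩ := exists_row_of_det_eq_zero hb
    obtain ⟨h1, h2⟩ := orthogonalVector_spec (c := fun k : {k : Fin n // k ≠ i} => b k) hv
      fun k => hker k
    refine mem_union_right _ (mem_biUnion.2 ⟨i, mem_univ _, mem_filter.2 ⟨mem_univ _, ?_, ?_⟩⟩)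
    · refine hall _ h1 fun k => ?_
      by_cases hk : k = i
      · rw [hk]
        exact hi _ h2
      · exact h2 ⟨k, hk⟩
    · exact hi _ h2
  · push Not at hall
    obtain ⟨v, hv, hker, hlt⟩ := hall
    refine mem_union_left _ ?_
    by_cases hs : #{i | (v i : ZMod 3) ≠ 0} < n / 16
    · refine mem_union_left _ (mem_kernelMeets.2 ⟨fun j => (v j : ZMod 3),
        mem_filter.2 ⟨mem_univ _, ?_, hs⟩, intCast_kernel hker⟩)
      obtain ⟨i, hi⟩ := hv
      exact fun h => hi (congrFun h i)
    · refine mem_union_right _ ?_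
      rcases signProb_le_or_exists_level v J with h | ⟨l, hl, h1, h2⟩
      · exact absurd ((signProb_le_map (Int.castRingHom (ZMod (3 ^ J))) v).trans h) (not_le.2 hlt)
      · refine mem_biUnion.2 ⟨l, hl, mem_kernelMeets.2 ⟨fun j => (v j : ZMod (3 ^ l)),
          mem_filter.2 ⟨mem_univ _, ⟨?_, h1⟩, h2⟩, intCast_kernel hker⟩⟩
        have hl0 : l ≠ 0 := by
          have := (mem_Icc.1 hl).1
          omega
        simp only [isUnit_intCast_three_pow_iff hl0]
        exact not_lt.1 hs

open scoped Classical in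
lemma card_sparse_kernel_le (n : ℕ) :
    (#(kernelMeets ({u | u ≠ 0 ∧ #{i | u i ≠ 0} < n / 16} : Finset (Fin n → ZMod 3))) : ℝ) ≤
      (2 ^ n) ^ n * (3 / 4) ^ n := by
  refine (card_kernelMeets_le (p := 1 / 2) _ fun u hu => ?_).trans ?_
  · obtain ⟨i, hi⟩ := Function.ne_iff.1 (mem_filter.1 hu).2.1
    refine signProb_le_half u (i := i) fun h => hi ?_
    rw [Pi.zero_apply]
    revert h
    generalize u i = x
    revert x
    decide
  · refine mul_le_mul_of_nonneg_left ?_ (by positivity)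
    have h8 : (8 : ℝ) ^ (n / 16) ≤ (6 / 5) ^ n := by
      calc (8 : ℝ) ^ (n / 16) ≤ ((6 / 5) ^ 16) ^ (n / 16) := by
            gcongr
            norm_num
        _ = (6 / 5) ^ (16 * (n / 16)) := (pow_mul _ _ _).symm
        _ ≤ (6 / 5) ^ n := pow_le_pow_right₀ (by norm_num) (Nat.mul_div_le n 16)
    have hcard : (#({u | u ≠ 0 ∧ #{i | u i ≠ 0} < n / 16} : Finset (Fin n → ZMod 3)) : ℝ) ≤
        8 ^ (n / 16) * (5 / 4) ^ n := by
      refine le_trans ?_ (card_sparse_le (n / 16))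
      gcongr
      tauto
    calc _ ≤ (6 / 5 : ℝ) ^ n * (5 / 4) ^ n * (1 / 2) ^ n := by
          gcongr
          exact hcard.trans (by gcongr)
      _ = (3 / 4) ^ n := by
          rw [← mul_pow, ← mul_pow]
          norm_num

open scoped Classical in
lemma exists_card_singular_le :
    ∃ n₀, ∀ n ≥ n₀, (#{b : Fin n → Fin n → Bool | (signMatrix n b).det = 0} : ℝ) ≤
      (2 ^ n) ^ n * (8 * n * (9 / 10) ^ n) := by
  obtain ⟨n₀, h₀⟩ := exists_card_biased_vectors_le (η := 1 / 12) (by norm_num) (by norm_num)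
  refine ⟨max n₀ 1, fun n hn => ?_⟩
  have hn1 : 1 ≤ n := (le_max_right _ _).trans hn
  have hn1' : (1 : ℝ) ≤ n := by exact_mod_cast hn1
  obtain ⟨J, hJ1, hJ2⟩ := exists_nat_pow_near (x := ((10 / 9 : ℝ)) ^ n) (y := 3)
    (one_le_pow₀ (by norm_num)) (by norm_num)
  have hJn : J ≤ n := by
    by_contra! h
    have : (10 / 9 : ℝ) ^ n < 3 ^ J := calc
      (10 / 9 : ℝ) ^ n ≤ 3 ^ n := by gcongr; norm_num
      _ < 3 ^ J := pow_lt_pow_right₀ (by norm_num) h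
    linarith
  have hp : (2 : ℝ) / 3 ^ J ≤ 6 * (9 / 10) ^ n := by
    rw [div_le_iff₀ (by positivity)]
    have : (9 / 10 : ℝ) ^ n * (10 / 9) ^ n = 1 := by
      rw [← mul_pow]
      norm_num
    rw [pow_succ] at hJ2
    have h9 : (0 : ℝ) < (9 / 10) ^ n := by positivity
    nlinarith
  have hlevel : ∀ l ∈ Icc 1 J, (#(kernelMeets
        ({u | (n / 16 ≤ #{i | IsUnit (u i)} ∧ 2 / 3 ^ l < signProb u) ∧ signProb u ≤ 6 / 3 ^ l} :
          Finset (Fin n → ZMod (3 ^ l)))) : ℝ) ≤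
      (2 ^ n) ^ n * (9 / 10) ^ n := by
    intro l hl
    refine (card_kernelMeets_le (p := 6 / 3 ^ l) _ fun u hu =>
      (mem_filter.1 hu).2.2).trans ?_
    refine mul_le_mul_of_nonneg_left ?_ (by positivity)
    have hl3 : (3 : ℝ) ^ l ≤ (10 / 9) ^ n :=
      (pow_le_pow_right₀ (by norm_num) (mem_Icc.1 hl).2).trans hJ1
    calc _ ≤ (1 / 12 * 3 ^ l : ℝ) ^ n * (6 / 3 ^ l) ^ n := by
          gcongr
          refine le_trans ?_ (h₀ n ((le_max_left _ _).trans hn) l hl3)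
          exact Nat.cast_le.2 (card_le_card (monotone_filter_right _ fun u _ hu => hu.1))
      _ = (1 / 2) ^ n := by
          rw [← mul_pow]
          congr 1
          field_simp
          norm_num
      _ ≤ (9 / 10) ^ n := pow_le_pow_left₀ (by norm_num) (by norm_num) n
  calc _ ≤ (2 ^ n) ^ n * (3 / 4) ^ n + ∑ _l ∈ Icc 1 J, ((2 : ℝ) ^ n) ^ n * (9 / 10) ^ n +
        ∑ _i : Fin n, ((2 : ℝ) ^ n) ^ n * (2 / 3 ^ J) := by
        refine (Nat.cast_le.2 ((card_le_card (singular_subset J)).trans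
          (card_union_le _ _))).trans ?_
        push_cast
        refine add_le_add ((Nat.cast_le.2 (card_union_le _ _)).trans ?_) ?_
        · push_cast
          refine add_le_add (card_sparse_kernel_le n) ((Nat.cast_le.2 card_biUnion_le).trans ?_)
          push_cast
          exact sum_le_sum hlevel
        · refine (Nat.cast_le.2 card_biUnion_le).trans ?_
          push_cast
          exact sum_le_sum fun i _ => card_row_mul_eq_zero_le i (by positivity) orthogonalVector
    _ ≤ (2 ^ n) ^ n * (9 / 10) ^ n + n * (((2 : ℝ) ^ n) ^ n * (9 / 10) ^ n) +
        n * (((2 : ℝ) ^ n) ^ n * (6 * (9 / 10) ^ n)) := by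
        have h34 : (3 / 4 : ℝ) ^ n ≤ (9 / 10) ^ n :=
          pow_le_pow_left₀ (by norm_num) (by norm_num) n
        rw [sum_const, sum_const, Nat.card_Icc, card_univ, Fintype.card_fin, nsmul_eq_mul,
          nsmul_eq_mul, Nat.add_sub_cancel]
        gcongr
    _ = (2 ^ n) ^ n * ((1 + 7 * n) * (9 / 10) ^ n) := by ring
    _ ≤ _ := by
        gcongr
        linarith

end counting

lemma binEntropy_nonneg {x : ℝ} (h0 : 0 < x) (h1 : x < 1) : 0 ≤ binEntropy x := by
  have h2 : 0 < 1 - x := by linarith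
  refine add_nonneg (mul_nonneg h0.le (Real.logb_nonneg (by norm_num) ?_))
    (mul_nonneg h2.le (Real.logb_nonneg (by norm_num) ?_))
  · rw [le_div_iff₀ h0]
    linarith
  · rw [le_div_iff₀ h2]
    linarith

lemma lt_of_binEntropy_eq {ε : ℝ} (hε : ε ∈ Set.Ioo (0 : ℝ) (1 / 2))
    (h : binEntropy ε + ε / Real.logb 2 (16 / 15) = 1) : ε < 1 / 10 := by
  have hpos : 0 < Real.logb 2 (16 / 15) := Real.logb_pos (by norm_num) (by norm_num)
  have hlog : Real.logb 2 (16 / 15) < 1 / 10 := by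
    have h10 : Real.logb 2 ((16 / 15) ^ 10) < 1 :=
      (Real.logb_lt_iff_lt_rpow (by norm_num) (by norm_num)).2 (by norm_num)
    rw [Real.logb_pow] at h10
    push_cast at h10
    linarith
  have h1 := binEntropy_nonneg hε.1 (by linarith [hε.2])
  have h2 : ε / Real.logb 2 (16 / 15) ≤ 1 := by linarith
  rw [div_le_one hpos] at h2
  linarith

end

/-- If `ε ∈ (0, 1/2)` solves `h(ε) + ε / log₂(16/15) = 1`, then the probability that a
uniformly random `n × n` `±1` matrix is singular is at most `(1 - ε + δ)^n` for large `n`. -/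
theorem prob_random_sign_matrix_singular_bound (ε : ℝ) (hε : ε ∈ Set.Ioo (0 : ℝ) (1 / 2))
    (hεeq : binEntropy ε + ε / Real.logb 2 (16 / 15) = 1) :
    ∀ δ > (0 : ℝ), ∃ N : ℕ, ∀ n ≥ N,
      (Nat.card {b : Fin n → Fin n → Bool // (signMatrix n b).det = 0} : ℝ) / 2 ^ (n ^ 2) ≤
        (1 - ε + δ) ^ n := by
  classical
  intro δ hδ
  have hε1 := lt_of_binEntropy_eq hε hεeq
  have hpos : 0 < 1 - ε := by linarith
  obtain ⟨n₀, h₀⟩ := exists_card_singular_le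
  have hlim := tendsto_self_mul_const_pow_of_lt_one (r := 9 / 10 / (1 - ε)) (by positivity)
    (by rw [div_lt_one hpos]; linarith)
  obtain ⟨n₁, h₁⟩ := Filter.eventually_atTop.1
    (hlim.eventually_lt_const (show (0 : ℝ) < 1 / 8 by norm_num))
  refine ⟨max n₀ n₁, fun n hn => ?_⟩
  have h2 := h₀ n ((le_max_left _ _).trans hn)
  have h3 := h₁ n ((le_max_right _ _).trans hn)
  rw [div_pow, ← mul_div_assoc, div_lt_iff₀ (by positivity)] at h3
  rw [Nat.card_eq_fintype_card, Fintype.card_subtype, sq, pow_mul, div_le_iff₀ (by positivity)]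
  calc _ ≤ ((2 : ℝ) ^ n) ^ n * (8 * n * (9 / 10) ^ n) := by convert h2
    _ ≤ ((2 : ℝ) ^ n) ^ n * (1 - ε) ^ n := by
        gcongr
        linarith
    _ ≤ ((2 : ℝ) ^ n) ^ n * (1 - ε + δ) ^ n := by
        gcongr
        linarith
    _ = _ := mul_comm _ _
end
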